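/- arXiv:1608.03499 — 3 statements merged into one kernel-verified Lean document; each statement's English description precedes it below -/
import Mathlib

section
/- The V_n-graded Hilbert function of the ideal generated by p_n in k[x]/J_n takes only the values 0 and 1: for every b ∈ ℕ^n, any two V_n-homogeneous polynomials of V_n-degree b lying in J_n + ⟨p_n⟩ are k-linearly dependent modulo J_n (equivalently, every V_n-homogeneous element of J_n + ⟨p_n⟩ is congruent modulo J_n to a scalar multiple of a monomial times p_n). The same statement holds with p_n replaced by p^+_{n,i} for any i ∈ [n]. -/
open scoped BigOperators

namespace Veronese

open MvPolynomial

/-- `c m = C(m,2)`. -/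
def c (m : ℕ) : ℕ := m.choose 2

variable (n : ℕ)

/-- multiplicity (as ℤ) of the index `i` in the unordered pair `s`. -/
def wt (s : Sym2 (Fin n)) : Fin n → ℤ :=
  Sym2.lift ⟨fun a b i => (if i = a then 1 else 0) + (if i = b then 1 else 0),
    fun a b => funext fun i => add_comm _ _⟩ s

/-- The Veronese grading map `V_n : ℤ^P → ℤ^n`, sending `e_{ij} ↦ e_i + e_j`. -/
def Vmap : (Sym2 (Fin n) → ℤ) →ₗ[ℤ] (Fin n → ℤ) where
  toFun u := fun i => ∑ s : Sym2 (Fin n), u s * wt n s i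
  map_add' u v := funext fun i => by
    simp [add_mul, Finset.sum_add_distrib]
  map_smul' m u := funext fun i => by
    simp [Finset.mul_sum, smul_eq_mul, mul_assoc]

/-- The Veronese lattice `L_n = ker V_n`. -/
def Llat : Submodule ℤ (Sym2 (Fin n) → ℤ) := LinearMap.ker (Vmap n)

/-- standard basis vector `e_{ij}` of `ℤ^P`. -/
def e (i j : Fin n) : Sym2 (Fin n) → ℤ := Pi.single s(i, j) 1

lemma e_comm (i j : Fin n) : e n i j = e n j i := by
  unfold e; rw [Sym2.eq_swap]

/-- `[ij|ij] = e_{ii} + e_{jj} - 2 e_{ij}`. -/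
def minorVec (i j : Fin n) : Sym2 (Fin n) → ℤ := e n i i + e n j j - 2 • e n i j

/-- The principal minor lattice `L'_n`. -/
def L'lat : Submodule ℤ (Sym2 (Fin n) → ℤ) :=
  Submodule.span ℤ {v | ∃ i j : Fin n, i < j ∧ v = minorVec n i j}

/-- the last index `n` (zero-based: `n-1`) of `Fin n`. -/
def lastIdx (hn : 0 < n) : Fin n := ⟨n - 1, Nat.sub_lt hn one_pos⟩

/-- embedding `[n-1] → [n]`. -/
def ι : Fin (n - 1) → Fin n := Fin.castLE (Nat.sub_le n 1)

/-- `[in|jn] = e_{ij} + e_{nn} - e_{in} - e_{jn}` for `i,j ∈ [n-1]`. -/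
def Bvec (hn : 0 < n) : Sym2 (Fin (n - 1)) → (Sym2 (Fin n) → ℤ) :=
  Sym2.lift ⟨fun i j =>
      e n (ι n i) (ι n j) + e n (lastIdx n hn) (lastIdx n hn)
        - e n (ι n i) (lastIdx n hn) - e n (ι n j) (lastIdx n hn),
    fun i j => by dsimp only; rw [e_comm n (ι n i) (ι n j)]; ring⟩

/-- The family `B'`: `[in|in]` on the diagonal, `2[in|jn]` off it. -/
noncomputable def B'vec (hn : 0 < n) (s : Sym2 (Fin (n - 1))) : Sym2 (Fin n) → ℤ :=
  if s.IsDiag then Bvec n hn s else 2 • Bvec n hn s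

/-- multiplicity (as ℕ) of the index `i` in the unordered pair `s`. -/
def wtN (s : Sym2 (Fin n)) : Fin n → ℕ :=
  Sym2.lift ⟨fun a b i => (if i = a then 1 else 0) + (if i = b then 1 else 0),
    fun a b => funext fun i => add_comm _ _⟩ s

/-- The Veronese degree of an exponent vector `u ∈ ℕ^P`. -/
def VN (u : Sym2 (Fin n) →₀ ℕ) : Fin n → ℕ := fun i => ∑ s : Sym2 (Fin n), u s * wtN n s i

/-- The fiber `V_n^{-1}[b] = {u ∈ ℕ^P : V_n u = b}`. -/
def fiber (b : Fin n → ℕ) : Set (Sym2 (Fin n) →₀ ℕ) := {u | VN n u = b}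

/-- natural inclusion `ℕ^P → ℤ^P`. -/
def toZ (u : Sym2 (Fin n) →₀ ℕ) : Sym2 (Fin n) → ℤ := fun s => (u s : ℤ)

lemma fiber_finite (b : Fin n → ℕ) : (fiber n b).Finite := by
  classical
  have hsub : fiber n b ⊆
      ↑(Finset.Iic ((Finsupp.equivFunOnFinite.symm fun _ => ∑ i, b i) : Sym2 (Fin n) →₀ ℕ)) := by
    intro u hu
    simp only [Finset.coe_Iic, Set.mem_Iic, Finsupp.le_def]
    intro s
    induction s using Sym2.ind with
    | _ i j =>
      have h1 : u s(i, j) * wtN n s(i, j) i ≤ VN n u i :=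
        Finset.single_le_sum (f := fun s => u s * wtN n s i)
          (fun s _ => Nat.zero_le _) (Finset.mem_univ s(i, j))
      have h2 : 1 ≤ wtN n s(i, j) i := by
        simp only [wtN, Sym2.lift_mk, if_pos rfl]
        exact Nat.le_add_right 1 _
      have h3 : u s(i, j) ≤ b i := by
        have hb : VN n u i = b i := congrFun hu i
        calc u s(i, j) ≤ u s(i, j) * wtN n s(i, j) i := Nat.le_mul_of_pos_right _ h2
          _ ≤ VN n u i := h1
          _ = b i := hb
      calc u s(i, j) ≤ b i := h3
        _ ≤ ∑ i, b i := Finset.single_le_sum (fun _ _ => Nat.zero_le _) (Finset.mem_univ _)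
        _ = (Finsupp.equivFunOnFinite.symm fun _ => ∑ i, b i) s(i, j) := by
            simp
  exact Set.Finite.subset (Finset.finite_toSet _) hsub

variable (k : Type*) [Field k]

/-- the polynomial ring `k[x_{ij}]`. -/
abbrev R := MvPolynomial (Sym2 (Fin n)) k

/-- The principal minor ideal `J_n`. -/
noncomputable def Jideal : Ideal (R n k) :=
  Ideal.span {f | ∃ i j : Fin n, i < j ∧ f = X s(i, i) * X s(j, j) - X s(i, j) ^ 2}

/-- The map `x_{ij} ↦ t_i t_j`. -/
noncomputable def veroHom : R n k →ₐ[k] MvPolynomial (Fin n) k :=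
  aeval fun s => Sym2.lift ⟨fun a b => X a * X b, fun a b => mul_comm _ _⟩ s

/-- The second Veronese ideal `I_n`. -/
noncomputable def Iideal : Ideal (R n k) := RingHom.ker (veroHom n k)

/-- A ℤ₂-twisting: an automorphism sending each variable to ± itself. -/
def IsTwisting (φ : R n k ≃ₐ[k] R n k) : Prop :=
  ∀ s : Sym2 (Fin n), φ (X s) = X s ∨ φ (X s) = - X s

/-- `f` is V_n-homogeneous of degree `b`. -/
def VHomog (f : R n k) (b : Fin n → ℕ) : Prop := ∀ u ∈ f.support, VN n u = b

/-- The fiber over `b` as a finite set. -/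
noncomputable def fiberFinset (b : Fin n → ℕ) : Finset (Sym2 (Fin n) →₀ ℕ) :=
  (fiber_finite n b).toFinset

/-- generating function of the canonical (0/1 off-diagonal) representatives of
the fiber over `b`. -/
noncomputable def pplusAt (b : Fin n → ℕ) : R n k :=
  ∑ u ∈ (fiberFinset n b).filter (fun u => ∀ s : Sym2 (Fin n), ¬s.IsDiag → u s ≤ 1),
    monomial u (1 : k)

/-- `p⁺_{n,j}` (for `n` odd): fiber over `(n-2,…,n-2) + e_j`. -/
noncomputable def pplusOdd (j : Fin n) : R n k :=
  pplusAt n k fun i => (n - 2) + if i = j then 1 else 0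

/-- `p⁺_n` (for `n` even): fiber over `(n-2,…,n-2)`. -/
noncomputable def pplusEven : R n k :=
  pplusAt n k fun _ => n - 2

/-- `p_n = ∏_{i<j∈[n-1]} (x_{ij} x_{nn} + x_{in} x_{jn})`. -/
noncomputable def pn (hn : 0 < n) : R n k :=
  ∏ p ∈ Finset.univ.filter (fun p : Fin (n - 1) × Fin (n - 1) => p.1 < p.2),
    (X s(ι n p.1, ι n p.2) * X s(lastIdx n hn, lastIdx n hn)
      + X s(ι n p.1, lastIdx n hn) * X s(ι n p.2, lastIdx n hn))


/-- the `V_n`-degree of `p⁺_{n,j}`: `(n-2,…,n-2) + e_j` if `n` is odd,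
`(n-2,…,n-2)` if `n` is even. -/
def bsel (j : Fin n) : Fin n → ℕ :=
  fun i => if n % 2 = 1 then (n - 2) + (if i = j then 1 else 0) else n - 2

/-- the polynomial `p⁺_{n,j}` (independent of `j` for `n` even). -/
noncomputable def pplus (j : Fin n) : R n k := pplusAt n k (bsel n j)

/-! ### Auxiliary material for the proof -/

section Aux

variable {n}

lemma wtN_diag (i j : Fin n) : wtN n s(i, i) j = if j = i then 2 else 0 := by
  simp only [wtN, Sym2.lift_mk]; split_ifs <;> rfl

lemma VN_add (u v : Sym2 (Fin n) →₀ ℕ) : VN n (u + v) = VN n u + VN n v := by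
  funext i; simp [VN, add_mul, Finset.sum_add_distrib]

lemma VN_zero : VN n 0 = 0 := by
  funext i; simp [VN]

lemma VN_single (s : Sym2 (Fin n)) (m : ℕ) (i : Fin n) :
    VN n (Finsupp.single s m) i = m * wtN n s i := by
  classical
  simp only [VN]
  rw [Finset.sum_eq_single s]
  · simp
  · intro t _ ht; simp [Finsupp.single_apply, ht.symm]
  · simp

/-- the group of classes of monomials modulo the ideal. -/
abbrev Cls (n : ℕ) := (Fin n → ℤ) × (Sym2 (Fin n) → ZMod 2)

/-- class of a monomial. -/
def cls : (Sym2 (Fin n) →₀ ℕ) →+ Cls n where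
  toFun u := (fun i => (VN n u i : ℤ), fun s => if s.IsDiag then 0 else (u s : ZMod 2))
  map_zero' := by
    ext i <;> simp [VN_zero]
  map_add' u v := by
    ext i
    · simp [VN_add]
    · simp only [Prod.snd_add, Pi.add_apply, Finsupp.add_apply]
      split_ifs <;> simp

lemma cls_fst (u : Sym2 (Fin n) →₀ ℕ) (i : Fin n) : (cls u).1 i = (VN n u i : ℤ) := rfl

lemma cls_snd (u : Sym2 (Fin n) →₀ ℕ) (s : Sym2 (Fin n)) :
    (cls u).2 s = if s.IsDiag then 0 else (u s : ZMod 2) := rfl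

lemma cls_eq_iff {u v : Sym2 (Fin n) →₀ ℕ} :
    cls u = cls v ↔ VN n u = VN n v ∧ ∀ s : Sym2 (Fin n), ¬ s.IsDiag → (u s : ZMod 2) = v s := by
  constructor
  · intro h
    refine ⟨funext fun i => ?_, fun s hs => ?_⟩
    · have := congrFun (congrArg Prod.fst h) i
      rw [cls_fst, cls_fst] at this
      exact_mod_cast this
    · have := congrFun (congrArg Prod.snd h) s
      rwa [cls_snd, cls_snd, if_neg hs, if_neg hs] at this
  · rintro ⟨h1, h2⟩
    refine Prod.ext (funext fun i => ?_) (funext fun s => ?_)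
    · rw [cls_fst, cls_fst, h1]
    · rw [cls_snd, cls_snd]
      split_ifs with hs
      · rfl
      · exact h2 s hs

/-- off-diagonal entries at most one. -/
def Red (u : Sym2 (Fin n) →₀ ℕ) : Prop := ∀ s : Sym2 (Fin n), ¬s.IsDiag → u s ≤ 1

lemma red_inj {u v : Sym2 (Fin n) →₀ ℕ} (hu : Red u) (hv : Red v) (h : cls u = cls v) :
    u = v := by
  classical
  rw [cls_eq_iff] at h
  obtain ⟨h1, h2⟩ := h
  have hoff : ∀ s : Sym2 (Fin n), ¬ s.IsDiag → u s = v s := by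
    intro s hs
    have h3 := h2 s hs
    rw [ZMod.natCast_eq_natCast_iff'] at h3
    have := hu s hs
    have := hv s hs
    omega
  ext s
  by_cases hs : s.IsDiag
  · induction s using Sym2.ind with
    | _ i j =>
      rw [Sym2.mk_isDiag_iff] at hs
      subst hs
      have h3 := congrFun h1 i
      simp only [VN] at h3
      rw [← Finset.add_sum_erase _ _ (Finset.mem_univ s(i, i)),
        ← Finset.add_sum_erase _ _ (Finset.mem_univ s(i, i))] at h3
      have h4 : ∑ x ∈ Finset.univ.erase s(i, i), u x * wtN n x i
          = ∑ x ∈ Finset.univ.erase s(i, i), v x * wtN n x i := by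
        refine Finset.sum_congr rfl fun x hx => ?_
        by_cases hd : x.IsDiag
        · induction x using Sym2.ind with
          | _ a b =>
            rw [Sym2.mk_isDiag_iff] at hd
            subst hd
            have : i ≠ a := by
              rintro rfl
              simp at hx
            rw [wtN_diag, if_neg this]
            simp
        · rw [hoff x hd]
      rw [h4, wtN_diag, if_pos rfl] at h3
      omega
  · exact hoff s hs

lemma wtN_add_diag (i j a : Fin n) :
    wtN n s(i, i) a + wtN n s(j, j) a = 2 * wtN n s(i, j) a := by
  simp only [wtN, Sym2.lift_mk]; ring

lemma cls_minor (i j : Fin n) :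
    cls (Finsupp.single s(i, i) 1 + Finsupp.single s(j, j) 1)
      = cls (Finsupp.single s(i, j) 2 : Sym2 (Fin n) →₀ ℕ) := by
  classical
  rw [cls_eq_iff]
  constructor
  · funext a
    rw [VN_add, Pi.add_apply, VN_single, VN_single, VN_single, one_mul, one_mul, wtN_add_diag]
  · intro s hs
    have h1 : s(i, i) ≠ s := by rintro rfl; simp at hs
    have h2 : s(j, j) ≠ s := by rintro rfl; simp at hs
    simp only [Finsupp.add_apply, Finsupp.single_apply, h1, h2, if_false]
    split_ifs
    · simp; rfl
    · simp

variable {k}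

lemma minor_mem (i j : Fin n) (hij : i ≠ j) :
    (X s(i, i) * X s(j, j) - X s(i, j) ^ 2 : R n k) ∈ Jideal n k := by
  rcases lt_or_gt_of_ne hij with h | h
  · exact Ideal.subset_span ⟨i, j, h, rfl⟩
  · refine Ideal.subset_span ⟨j, i, h, ?_⟩
    rw [Sym2.eq_swap (a := i) (b := j)]; ring

lemma exists_red (u : Sym2 (Fin n) →₀ ℕ) :
    ∃ v, Red v ∧ cls v = cls u ∧ (monomial u (1 : k) - monomial v 1 : R n k) ∈ Jideal n k := by
  classical
  induction hm : ∑ s ∈ Finset.univ.filter (fun s : Sym2 (Fin n) => ¬ s.IsDiag), u s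
    using Nat.strong_induction_on generalizing u with
  | _ m ih =>
    by_cases hu : Red u
    · exact ⟨u, hu, rfl, by simp⟩
    · unfold Red at hu
      push Not at hu
      obtain ⟨s, hs, h2⟩ := hu
      induction s using Sym2.ind with
      | _ i j =>
        have hij : i ≠ j := by simpa using hs
        have hle : Finsupp.single s(i, j) 2 ≤ u := by
          rw [Finsupp.single_le_iff]; exact h2
        obtain ⟨w, rfl⟩ := exists_add_of_le hle
        set u' : Sym2 (Fin n) →₀ ℕ :=
          (Finsupp.single s(i, i) 1 + Finsupp.single s(j, j) 1) + w with hu'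
        have hval : ∀ s : Sym2 (Fin n), ¬ s.IsDiag → u' s = w s := by
          intro s hs
          have h1 : s(i, i) ≠ s := by rintro rfl; simp at hs
          have h2 : s(j, j) ≠ s := by rintro rfl; simp at hs
          simp [hu', Finsupp.single_apply, h1, h2]
        have hlt : ∑ s ∈ Finset.univ.filter (fun s : Sym2 (Fin n) => ¬ s.IsDiag), u' s < m := by
          rw [← hm]
          refine Finset.sum_lt_sum (fun t ht => ?_) ⟨s(i, j), by simpa using hij, ?_⟩
          · rw [hval t (by simpa using ht)]; simp
          · rw [hval _ hs]; simp
        obtain ⟨v, hv1, hv2, hv3⟩ := ih _ hlt u' rfl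
        refine ⟨v, hv1, ?_, ?_⟩
        · rw [hv2, hu', map_add cls _ w, map_add cls _ w, cls_minor i j]
        · have : (monomial (Finsupp.single s(i, j) 2 + w) (1 : k) - monomial v 1 : R n k)
              = -(monomial w 1 * (X s(i, i) * X s(j, j) - X s(i, j) ^ 2))
                + (monomial u' 1 - monomial v 1) := by
            have e1 : (monomial (Finsupp.single s(i, j) 2 + w) (1 : k) : R n k)
                = X s(i, j) ^ 2 * monomial w 1 := by
              rw [X_pow_eq_monomial, monomial_mul, one_mul]
            have e2 : (monomial u' (1 : k) : R n k)
                = X s(i, i) * X s(j, j) * monomial w 1 := by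
              rw [hu', X, X, monomial_mul, monomial_mul, one_mul, one_mul]
            rw [e1, e2]; ring
          rw [this]
          exact Ideal.add_mem _ (Ideal.neg_mem_iff _ |>.2
            (Ideal.mul_mem_left _ _ (minor_mem i j hij))) hv3

lemma monomial_sub_mem {u v : Sym2 (Fin n) →₀ ℕ} (h : cls u = cls v) :
    (monomial u (1 : k) - monomial v 1 : R n k) ∈ Jideal n k := by
  obtain ⟨u', a1, a2, a3⟩ := exists_red (k := k) u
  obtain ⟨v', b1, b2, b3⟩ := exists_red (k := k) v
  have : u' = v' := red_inj a1 b1 (by rw [a2, b2, h])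
  subst this
  have := Ideal.sub_mem _ a3 b3
  simpa using this

/-- the class map on polynomials. -/
noncomputable def N : R n k →ₐ[k] AddMonoidAlgebra k (Cls n) :=
  AddMonoidAlgebra.mapDomainAlgHom k k (cls (n := n))

lemma N_monomial (u : Sym2 (Fin n) →₀ ℕ) (a : k) :
    N (monomial u a : R n k) = AddMonoidAlgebra.single (cls u) a := by
  exact AddMonoidAlgebra.mapDomain_single ..

/-- shorthand for the basis elements of the group algebra. -/
noncomputable def sg (c : Cls n) : AddMonoidAlgebra k (Cls n) := AddMonoidAlgebra.single c 1

lemma sg_mul (c d : Cls n) : (sg c * sg d : AddMonoidAlgebra k (Cls n)) = sg (c + d) := by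
  simp [sg, AddMonoidAlgebra.single_mul_single]

lemma sg_zero : (sg 0 : AddMonoidAlgebra k (Cls n)) = 1 := rfl

lemma N_X (s : Sym2 (Fin n)) : N (X s : R n k) = sg (cls (Finsupp.single s 1)) :=
  N_monomial _ _

lemma N_of_mem {f : R n k} (hf : f ∈ Jideal n k) : N f = 0 := by
  have : Jideal n k ≤ RingHom.ker (N (n := n) (k := k)) := by
    refine Ideal.span_le.2 ?_
    rintro _ ⟨i, j, hij, rfl⟩
    simp only [SetLike.mem_coe, RingHom.mem_ker, map_sub, map_mul, map_pow, N_X, sg_mul, pow_two]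
    rw [← map_add, ← map_add, cls_minor i j, ← Finsupp.single_add, sub_self]
  exact this hf

lemma mem_of_N {f : R n k} (hf : N f = 0) : f ∈ Jideal n k := by
  classical
  let r : Cls n → (Sym2 (Fin n) →₀ ℕ) := Function.invFun cls
  have hr : ∀ u, cls (r (cls u)) = cls u := fun u =>
    Function.invFun_eq (f := cls (n := n)) ⟨u, rfl⟩
  let L : AddMonoidAlgebra k (Cls n) → R n k := fun F =>
    Finsupp.linearCombination k (fun c => (monomial (r c) (1 : k) : R n k)) F.coeff
  have hL : ∀ F G, L (F + G) = L F + L G := fun F G => by simp [L]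
  have key : ∀ f : R n k, f - L (N f) ∈ Jideal n k := by
    intro f
    induction f using MvPolynomial.induction_on' with
    | monomial u a =>
      have : L (N (monomial u a : R n k)) = C a * monomial (r (cls u)) 1 := by
        rw [N_monomial]
        simp [L, C_mul', Finsupp.linearCombination_single]
      rw [this]
      have h2 : (monomial u a : R n k) = C a * monomial u 1 := by
        rw [C_mul_monomial, mul_one]
      rw [h2, ← mul_sub]
      exact Ideal.mul_mem_left _ _ (monomial_sub_mem (hr u).symm)
    | add p q hp hq =>
      rw [map_add, hL, add_sub_add_comm]
      exact Ideal.add_mem _ hp hq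
  have := key f
  rw [hf] at this
  simpa [L] using this


/-- the degree grading on the group algebra. -/
noncomputable abbrev gr (d : Fin n → ℤ) : Submodule k (AddMonoidAlgebra k (Cls n)) :=
  AddMonoidAlgebra.gradeBy k (AddMonoidHom.fst (Fin n → ℤ) (Sym2 (Fin n) → ZMod 2)) d

lemma sg_mem_gr (c : Cls n) : (sg c : AddMonoidAlgebra k (Cls n)) ∈ gr (k := k) c.1 :=
  AddMonoidAlgebra.single_mem_gradeBy
    (AddMonoidHom.fst (Fin n → ℤ) (Sym2 (Fin n) → ZMod 2)) c (1 : k)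

/-- integer valued degree -/
def zc (b : Fin n → ℕ) : Fin n → ℤ := fun i => (b i : ℤ)

lemma N_mem_gr {f : R n k} {b : Fin n → ℕ} (hf : VHomog n k f b) : N f ∈ gr (k := k) (zc b) := by
  classical
  rw [f.as_sum, map_sum]
  refine Submodule.sum_mem _ fun u hu => ?_
  rw [N_monomial]
  have : zc b = (cls u).1 := by
    rw [← hf u hu]; rfl
  rw [this]
  exact AddMonoidAlgebra.single_mem_gradeBy
    (AddMonoidHom.fst (Fin n → ℤ) (Sym2 (Fin n) → ZMod 2)) (cls u) _

lemma final_aux (q : R n k) (bq : Fin n → ℤ) (hom : N q ∈ gr (k := k) bq)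
    (stab : ∀ u v, VN n u = VN n v → sg (cls u) * N q = sg (cls v) * N q) (b : Fin n → ℕ) :
    ∃ W : AddMonoidAlgebra k (Cls n), ∀ f : R n k, VHomog n k f b →
      f ∈ Jideal n k + Ideal.span {q} → ∃ α : k, N f = α • W := by
  classical
  let pr := GradedAlgebra.proj (gr (n := n) (k := k)) (zc b)
  obtain ⟨W, hW⟩ : ∃ W : AddMonoidAlgebra k (Cls n), ∀ u, zc (VN n u) + bq = zc b →
      sg (cls u) * N q = W := by
    by_cases h : ∃ v, zc (VN n v) + bq = zc b
    · obtain ⟨v, hv⟩ := h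
      refine ⟨sg (cls v) * N q, fun u hu => stab u v ?_⟩
      have h1 : zc (VN n u) = zc (VN n v) := add_right_cancel (hu.trans hv.symm)
      funext i
      have := congrFun h1 i
      simp only [zc] at this
      exact_mod_cast this
    · push Not at h
      exact ⟨0, fun u hu => absurd hu (h u)⟩
  refine ⟨W, fun f hf hfI => ?_⟩
  rw [Submodule.add_eq_sup, Submodule.mem_sup] at hfI
  obtain ⟨j, hj, y, hy, rfl⟩ := hfI
  obtain ⟨h, rfl⟩ := Ideal.mem_span_singleton'.1 hy
  have h1 : pr (N (j + h * q)) = N (j + h * q) := by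
    simp only [pr]
    rw [GradedAlgebra.proj_apply]
    exact DirectSum.decompose_of_mem_same _ (N_mem_gr hf)
  rw [← h1, map_add, N_of_mem hj, zero_add, map_mul]
  clear h1 hf hy
  induction h using MvPolynomial.induction_on' with
  | monomial u a =>
    have e1 : N (monomial u a : R n k) * N q = a • (sg (cls u) * N q) := by
      rw [N_monomial, ← smul_mul_assoc]
      congr 1
      simp [sg]
    have hm : sg (cls u) * N q ∈ gr (k := k) (zc (VN n u) + bq) :=
      SetLike.mul_mem_graded (sg_mem_gr (cls u)) hom
    rw [e1, map_smul]
    by_cases hu : zc (VN n u) + bq = zc b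
    · refine ⟨a, ?_⟩
      rw [← hW u hu]
      congr 1
      simp only [pr]
      rw [GradedAlgebra.proj_apply]
      rw [hu] at hm
      exact DirectSum.decompose_of_mem_same _ hm
    · refine ⟨0, ?_⟩
      have : pr (sg (cls u) * N q) = 0 := by
        simp only [pr]
        rw [GradedAlgebra.proj_apply]
        exact DirectSum.decompose_of_mem_ne _ hm hu
      rw [this]; simp
  | add p r hp hr =>
    obtain ⟨α, hα⟩ := hp
    obtain ⟨β, hβ⟩ := hr
    exact ⟨α + β, by rw [map_add, add_mul, map_add, hα, hβ, add_smul]⟩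

lemma final_main (q : R n k) (bq : Fin n → ℤ) (hom : N q ∈ gr (k := k) bq)
    (stab : ∀ u v, VN n u = VN n v → sg (cls u) * N q = sg (cls v) * N q) (b : Fin n → ℕ)
    (f g : R n k)
    (hf : VHomog n k f b) (hg : VHomog n k g b)
    (hfI : f ∈ Jideal n k + Ideal.span {q})
    (hgI : g ∈ Jideal n k + Ideal.span {q}) :
    ∃ a d : k, (a ≠ 0 ∨ d ≠ 0) ∧ a • f + d • g ∈ Jideal n k := by
  obtain ⟨W, hW⟩ := final_aux q bq hom stab b
  obtain ⟨α, hα⟩ := hW f hf hfI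
  obtain ⟨β, hβ⟩ := hW g hg hgI
  by_cases h : α = 0
  · refine ⟨1, 0, Or.inl one_ne_zero, mem_of_N ?_⟩
    rw [map_add, map_smul, map_smul, hα, h]; simp
  · refine ⟨β, -α, Or.inr (neg_ne_zero.2 h), mem_of_N ?_⟩
    rw [map_add, map_smul, map_smul, hα, hβ, smul_smul, smul_smul, ← add_smul]
    simp [mul_comm]

/-- the stabilizer of an element of the group algebra. -/
def stab (Q : AddMonoidAlgebra k (Cls n)) : AddSubgroup (Cls n) where
  carrier := {c | sg c * Q = Q}
  zero_mem' := by simp [sg_zero]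
  add_mem' {a b} ha hb := by
    simp only [Set.mem_setOf_eq] at *
    rw [← sg_mul, mul_assoc, hb, ha]
  neg_mem' {a} ha := by
    simp only [Set.mem_setOf_eq] at *
    conv_lhs => rw [← ha]
    rw [← mul_assoc, sg_mul, neg_add_cancel, sg_zero, one_mul]

lemma mem_stab_iff (Q : AddMonoidAlgebra k (Cls n)) (c d : Cls n) :
    c - d ∈ stab Q ↔ sg c * Q = sg d * Q := by
  change sg (c - d) * Q = Q ↔ _
  constructor
  · intro h
    conv_rhs => rw [← h]
    rw [← mul_assoc, sg_mul, add_sub_cancel]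
  · intro h
    have : (sg (c - d) : AddMonoidAlgebra k (Cls n)) = sg (-d) * sg c := by
      rw [sg_mul]; congr 1; abel
    rw [this, mul_assoc, h, ← mul_assoc, sg_mul, neg_add_cancel, sg_zero, one_mul]

lemma sum_wtN (s : Sym2 (Fin n)) : ∑ i, wtN n s i = 2 := by
  induction s using Sym2.ind with
  | _ a b => simp [wtN, Finset.sum_add_distrib]

lemma sum_VN (u : Sym2 (Fin n) →₀ ℕ) : ∑ i, VN n u i = 2 * ∑ s, u s := by
  simp only [VN]
  rw [Finset.sum_comm, Finset.mul_sum]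
  refine Finset.sum_congr rfl fun s _ => ?_
  rw [← Finset.mul_sum, sum_wtN, mul_comm]

lemma stab_of_triangles (Q : AddMonoidAlgebra k (Cls n)) (l : Fin n)
    (h : ∀ i j : Fin n, sg (cls (Finsupp.single s(i, j) 1 + Finsupp.single s(l, l) 1)) * Q
      = sg (cls (Finsupp.single s(i, l) 1 + Finsupp.single s(j, l) 1)) * Q)
    (u v : Sym2 (Fin n) →₀ ℕ) (huv : VN n u = VN n v) :
    sg (cls u) * Q = sg (cls v) * Q := by
  classical
  rw [← mem_stab_iff, ← QuotientAddGroup.eq_iff_sub_mem]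
  let π : (Sym2 (Fin n) →₀ ℕ) →+ Cls n ⧸ stab Q := (QuotientAddGroup.mk' (stab Q)).comp cls
  change π u = π v
  let z : Fin n → Cls n ⧸ stab Q := fun i => π (Finsupp.single s(i, l) 1)
  let w := π (Finsupp.single s(l, l) 1)
  have h1 : ∀ s : Sym2 (Fin n), π (Finsupp.single s 1) + w = ∑ i, wtN n s i • z i := by
    intro s
    induction s using Sym2.ind with
    | _ i j =>
      have e1 : π (Finsupp.single s(i, j) 1 + Finsupp.single s(l, l) 1)
          = π (Finsupp.single s(i, l) 1 + Finsupp.single s(j, l) 1) :=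
        QuotientAddGroup.eq_iff_sub_mem.2 ((mem_stab_iff _ _ _).2 (h i j))
      rw [map_add, map_add] at e1
      refine e1.trans ?_
      simp [wtN, add_smul, Finset.sum_add_distrib, z]
  have h2 : ∀ u : Sym2 (Fin n) →₀ ℕ, π u + (∑ s, u s) • w = ∑ i, VN n u i • z i := by
    intro u
    have e1 : π u = ∑ s, u s • π (Finsupp.single s 1) := by
      conv_lhs => rw [← Finsupp.univ_sum_single u]
      rw [map_sum]
      refine Finset.sum_congr rfl fun s _ => ?_
      rw [← map_nsmul, Finsupp.smul_single, smul_eq_mul, mul_one]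
    rw [e1, Finset.sum_smul, ← Finset.sum_add_distrib]
    simp only [VN, Finset.sum_smul, mul_smul]
    rw [Finset.sum_comm]
    refine Finset.sum_congr rfl fun s _ => ?_
    rw [← nsmul_add, h1, ← Finset.sum_nsmul]
  have h3 : ∑ s, u s = ∑ s, v s := by
    have := sum_VN u
    have := sum_VN v
    rw [huv] at *
    omega
  have := (h2 u).trans ((by rw [huv] : _ = _).trans (h2 v).symm)
  rw [h3] at this
  exact add_right_cancel this

lemma cls_two_eq (u v : Sym2 (Fin n) →₀ ℕ) (h : VN n u = VN n v) :
    cls u + cls u = cls v + cls v := by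
  rw [← map_add, ← map_add, cls_eq_iff]
  refine ⟨by rw [VN_add, VN_add, h], fun s _ => ?_⟩
  simp only [Finsupp.add_apply, Nat.cast_add]
  rw [CharTwo.add_self_eq_zero, CharTwo.add_self_eq_zero]

lemma VN_tri (i j l : Fin n) :
    VN n (Finsupp.single s(i, j) 1 + Finsupp.single s(l, l) 1)
      = VN n (Finsupp.single s(i, l) 1 + Finsupp.single s(j, l) 1) := by
  funext a
  simp only [VN_add, Pi.add_apply, VN_single, wtN, Sym2.lift_mk]
  ring

lemma N_pn (hn : 0 < n) : N (pn n k hn) =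
    ∏ p ∈ Finset.univ.filter (fun p : Fin (n - 1) × Fin (n - 1) => p.1 < p.2),
      (sg (cls (Finsupp.single s(ι n p.1, ι n p.2) 1
          + Finsupp.single s(lastIdx n hn, lastIdx n hn) 1))
        + sg (cls (Finsupp.single s(ι n p.1, lastIdx n hn) 1
          + Finsupp.single s(ι n p.2, lastIdx n hn) 1))) := by
  simp only [pn, map_prod, map_add, map_mul, N_X, sg_mul]

lemma pn_hom (hn : 0 < n) : ∃ bq, N (pn n k hn) ∈ gr (k := k) bq := by
  classical
  rw [N_pn]
  refine ⟨_, SetLike.prod_mem_graded (A := gr (n := n) (k := k)) (fun p : Fin (n - 1) × Fin (n - 1) =>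
    (cls (Finsupp.single s(ι n p.1, ι n p.2) 1
          + Finsupp.single s(lastIdx n hn, lastIdx n hn) 1)).1) _ fun p _ => ?_⟩
  refine Submodule.add_mem _ (sg_mem_gr _) ?_
  have : (cls (Finsupp.single s(ι n p.1, ι n p.2) 1
      + Finsupp.single s(lastIdx n hn, lastIdx n hn) 1)).1
      = (cls (Finsupp.single s(ι n p.1, lastIdx n hn) 1
          + Finsupp.single s(ι n p.2, lastIdx n hn) 1)).1 := by
    funext a
    rw [cls_fst, cls_fst, VN_tri]
  rw [this]
  exact sg_mem_gr _

lemma exists_iota (hn : 0 < n) (i : Fin n) (h : i ≠ lastIdx n hn) : ∃ i', ι n i' = i := by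
  have : i.1 < n - 1 := by
    have h1 := i.2
    have h2 : i.1 ≠ n - 1 := fun h' => h (Fin.ext h')
    omega
  exact ⟨⟨i.1, this⟩, rfl⟩

lemma pn_tri_lt (hn : 0 < n) (i j : Fin (n - 1)) (hij : i < j) :
    sg (cls (Finsupp.single s(ι n i, ι n j) 1 + Finsupp.single s(lastIdx n hn, lastIdx n hn) 1))
        * N (pn n k hn)
      = sg (cls (Finsupp.single s(ι n i, lastIdx n hn) 1
        + Finsupp.single s(ι n j, lastIdx n hn) 1)) * N (pn n k hn) := by
  classical
  rw [N_pn, ← Finset.mul_prod_erase _ _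
    (Finset.mem_filter.2 ⟨Finset.mem_univ (i, j), hij⟩)]
  rw [← mul_assoc, ← mul_assoc]
  congr 1
  rw [mul_add, mul_add, sg_mul, sg_mul, sg_mul, sg_mul, cls_two_eq _ _ (VN_tri _ _ _), add_comm]
  congr 2
  rw [add_comm]

lemma pn_tri (hn : 0 < n) (i j : Fin n) :
    sg (cls (Finsupp.single s(i, j) 1 + Finsupp.single s(lastIdx n hn, lastIdx n hn) 1))
        * N (pn n k hn)
      = sg (cls (Finsupp.single s(i, lastIdx n hn) 1
        + Finsupp.single s(j, lastIdx n hn) 1)) * N (pn n k hn) := by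
  by_cases hi : i = lastIdx n hn
  · subst hi
    rw [add_comm, Sym2.eq_swap (a := j)]
  by_cases hj : j = lastIdx n hn
  · subst hj; rfl
  by_cases hij : i = j
  · subst hij
    rw [cls_minor, ← Finsupp.single_add]
  obtain ⟨i', rfl⟩ := exists_iota hn i hi
  obtain ⟨j', rfl⟩ := exists_iota hn j hj
  have hne : i' ≠ j' := fun h => hij (by rw [h])
  rcases lt_or_gt_of_ne hne with h | h
  · exact pn_tri_lt hn i' j' h
  · rw [Sym2.eq_swap, pn_tri_lt hn j' i' h, add_comm]

/-- classes that can occur in degree `b`. -/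
def Good (b : Fin n → ℤ) (x : Cls n) : Prop :=
  x.1 = b ∧ (∀ s : Sym2 (Fin n), s.IsDiag → x.2 s = 0) ∧
    ∀ i, ∑ s, x.2 s * (wtN n s i : ZMod 2) = (b i : ZMod 2)

lemma Good.add {b b' : Fin n → ℤ} {x y : Cls n} (hx : Good b x) (hy : Good b' y) :
    Good (b + b') (x + y) := by
  refine ⟨by rw [Prod.fst_add, hx.1, hy.1], fun s hs => ?_, fun i => ?_⟩
  · rw [Prod.snd_add, Pi.add_apply, hx.2.1 s hs, hy.2.1 s hs, add_zero]
  · simp only [Prod.snd_add, Pi.add_apply, add_mul, Finset.sum_add_distrib, hx.2.2, hy.2.2]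
    push_cast; rfl

lemma Good.neg {b : Fin n → ℤ} {x : Cls n} (hx : Good b x) : Good (-b) (-x) := by
  refine ⟨by rw [Prod.fst_neg, hx.1], fun s hs => ?_, fun i => ?_⟩
  · rw [Prod.snd_neg, Pi.neg_apply, hx.2.1 s hs, neg_zero]
  · simp only [Prod.snd_neg, Pi.neg_apply, neg_mul, Finset.sum_neg_distrib, hx.2.2]
    push_cast; rfl

lemma good_cls (u : Sym2 (Fin n) →₀ ℕ) : Good (zc (VN n u)) (cls u) := by
  refine ⟨rfl, fun s hs => by rw [cls_snd, if_pos hs], fun i => ?_⟩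
  simp only [zc, VN, cls_snd]
  push_cast
  refine Finset.sum_congr rfl fun s _ => ?_
  split_ifs with hs
  · induction s using Sym2.ind with
    | _ a b =>
      rw [Sym2.mk_isDiag_iff] at hs
      subst hs
      rw [wtN_diag]
      split_ifs
      · rw [zero_mul]
        have : ((2 : ℕ) : ZMod 2) = 0 := rfl
        rw [this, mul_zero]
      · simp
  · rfl

lemma deg_le (i : Fin n) (g : Sym2 (Fin n) → ZMod 2) :
    ∑ s ∈ Finset.univ.filter (fun s : Sym2 (Fin n) => ¬ s.IsDiag), (g s).val * wtN n s i
      ≤ n - 1 := by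
  classical
  have h1 : ∀ s ∈ Finset.univ.filter (fun s : Sym2 (Fin n) => ¬ s.IsDiag),
      (g s).val * wtN n s i ≤ if i ∈ s then 1 else 0 := by
    intro s hs
    have hs' : ¬ s.IsDiag := by simpa using hs
    have hv : (g s).val ≤ 1 := Nat.lt_succ_iff.1 (ZMod.val_lt (g s))
    have hw : wtN n s i ≤ if i ∈ s then 1 else 0 := by
      induction s using Sym2.ind with
      | _ a b =>
        rw [Sym2.mk_isDiag_iff] at hs'
        simp only [wtN, Sym2.lift_mk, Sym2.mem_iff]
        split_ifs <;> simp_all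
    calc (g s).val * wtN n s i ≤ 1 * wtN n s i := Nat.mul_le_mul_right _ hv
      _ ≤ _ := by rw [one_mul]; exact hw
  refine (Finset.sum_le_sum h1).trans ?_
  rw [← Finset.sum_filter, Finset.sum_const, smul_eq_mul, mul_one]
  have h2 : (Finset.univ.filter (fun s : Sym2 (Fin n) => ¬ s.IsDiag)).filter (fun s => i ∈ s)
      ⊆ (Finset.univ.erase i).image (fun j => s(i, j)) := by
    intro s hs
    simp only [Finset.mem_filter, Finset.mem_univ, true_and] at hs
    obtain ⟨hs1, j, rfl⟩ := hs
    refine Finset.mem_image.2 ⟨j, ?_, rfl⟩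
    rw [Sym2.mk_isDiag_iff] at hs1
    simp [Ne.symm hs1]
  refine (Finset.card_le_card h2).trans (Finset.card_image_le.trans ?_)
  rw [Finset.card_erase_of_mem (Finset.mem_univ _)]
  simp

lemma exists_rep (b : Fin n → ℕ) (hb : ∀ i, n - 2 ≤ b i) (hn : 2 ≤ n) (x : Cls n)
    (hx : Good (zc b) x) : ∃ u, VN n u = b ∧ Red u ∧ cls u = x := by
  classical
  obtain ⟨hx1, hx2, hx3⟩ := hx
  let D : Fin n → ℕ := fun i =>
    ∑ s ∈ Finset.univ.filter (fun s : Sym2 (Fin n) => ¬ s.IsDiag), (x.2 s).val * wtN n s i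
  let u0 : Sym2 (Fin n) →₀ ℕ := Finsupp.equivFunOnFinite.symm fun s => (x.2 s).val
  have hu0 : ∀ s, u0 s = (x.2 s).val := fun s => rfl
  have hD : ∀ i, VN n u0 i = D i := by
    intro i
    simp only [VN, D, hu0]
    rw [Finset.sum_filter]
    refine Finset.sum_congr rfl fun s _ => ?_
    split_ifs with hs
    · rw [hx2 s hs]; simp
    · rfl
  have hpar : ∀ i, D i % 2 = b i % 2 := by
    intro i
    rw [← ZMod.natCast_eq_natCast_iff', ← hD]
    have := hx3 i
    simp only [zc, Int.cast_natCast] at this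
    rw [← this]
    simp only [VN, hu0]
    push_cast
    simp
  have hle : ∀ i, D i ≤ b i := by
    intro i
    have h1 : D i ≤ n - 1 := deg_le i x.2
    have h2 := hpar i
    have h3 := hb i
    omega
  let dg : Sym2 (Fin n) →₀ ℕ := ∑ j, Finsupp.single s(j, j) ((b j - D j) / 2)
  have hdg : ∀ i, VN n dg i = b i - D i := by
    intro i
    let VH : (Sym2 (Fin n) →₀ ℕ) →+ (Fin n → ℕ) := ⟨⟨VN n, VN_zero⟩, VN_add⟩
    have : VN n dg = ∑ j, VN n (Finsupp.single s(j, j) ((b j - D j) / 2)) :=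
      map_sum VH _ _
    rw [this, Finset.sum_apply]
    simp only [VN_single, wtN_diag]
    rw [Finset.sum_eq_single i]
    · rw [if_pos rfl]
      have h1 := hle i
      have h2 := hpar i
      omega
    · intro j _ hj
      rw [if_neg hj.symm, mul_zero]
    · simp
  have hdg0 : ∀ s : Sym2 (Fin n), ¬ s.IsDiag → dg s = 0 := by
    intro s hs
    simp only [dg, Finsupp.finsetSum_apply]
    refine Finset.sum_eq_zero fun j _ => ?_
    have : s(j, j) ≠ s := by rintro rfl; simp at hs
    simp [Finsupp.single_apply, this]
  have hV : VN n (u0 + dg) = b := by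
    funext i
    rw [VN_add, Pi.add_apply, hD, hdg]
    have := hle i
    omega
  refine ⟨u0 + dg, hV, fun s hs => ?_, Prod.ext ?_ (funext fun s => ?_)⟩
  · rw [Finsupp.add_apply, hdg0 s hs, hu0]
    exact Nat.lt_succ_iff.1 (ZMod.val_lt (x.2 s))
  · rw [hx1]
    funext i
    rw [cls_fst, hV]; rfl
  · rw [cls_snd]
    split_ifs with hs
    · rw [hx2 s hs]
    · rw [Finsupp.add_apply, hdg0 s hs, hu0]; simp

lemma N_pplusAt (b : Fin n → ℕ) : N (pplusAt n k b) =
    ∑ u ∈ (fiberFinset n b).filter (fun u => ∀ s : Sym2 (Fin n), ¬s.IsDiag → u s ≤ 1),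
      sg (cls u) := by
  simp only [pplusAt, map_sum, N_monomial, sg]

lemma mem_fib (b : Fin n → ℕ) (u : Sym2 (Fin n) →₀ ℕ) :
    u ∈ (fiberFinset n b).filter (fun u => ∀ s : Sym2 (Fin n), ¬s.IsDiag → u s ≤ 1)
      ↔ VN n u = b ∧ Red u := by
  simp [fiberFinset, fiber, Red]

lemma pplus_hom (b : Fin n → ℕ) : N (pplusAt n k b) ∈ gr (k := k) (zc b) := by
  rw [N_pplusAt]
  refine Submodule.sum_mem _ fun u hu => ?_
  have : zc b = (cls u).1 := by
    rw [← ((mem_fib b u).1 hu).1]; rfl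
  rw [this]
  exact sg_mem_gr _

lemma pplus_stab (b : Fin n → ℕ) (hb : ∀ i, n - 2 ≤ b i) (hn : 2 ≤ n)
    (u v : Sym2 (Fin n) →₀ ℕ) (huv : VN n u = VN n v) :
    sg (cls u) * N (pplusAt n k b) = sg (cls v) * N (pplusAt n k b) := by
  classical
  rw [← mem_stab_iff]
  change sg (cls u - cls v) * _ = _
  have hc : Good 0 (cls u - cls v) := by
    have := (good_cls u).add (good_cls v).neg
    rwa [huv, add_neg_cancel, ← sub_eq_add_neg] at this
  generalize cls u - cls v = c at hc
  rw [N_pplusAt, ← Finset.sum_image (f := fun x => (sg x : AddMonoidAlgebra k (Cls n)))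
    (s := (fiberFinset n b).filter (fun u => ∀ s : Sym2 (Fin n), ¬s.IsDiag → u s ≤ 1))
    (g := fun u => cls u)]
  · have hG : ∀ x, x ∈ ((fiberFinset n b).filter
        (fun u => ∀ s : Sym2 (Fin n), ¬s.IsDiag → u s ≤ 1)).image (fun u => cls u)
        ↔ Good (zc b) x := by
      intro x
      rw [Finset.mem_image]
      constructor
      · rintro ⟨u, hu, rfl⟩
        rw [← ((mem_fib b u).1 hu).1]
        exact good_cls u
      · intro hx
        obtain ⟨u, h1, h2, h3⟩ := exists_rep b hb hn x hx
        exact ⟨u, (mem_fib b u).2 ⟨h1, h2⟩, h3⟩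
    rw [Finset.mul_sum]
    simp only [sg_mul]
    refine Finset.sum_bij' (fun x _ => c + x) (fun x _ => -c + x) ?_ ?_ ?_ ?_ ?_
    · intro x hx
      rw [hG] at hx ⊢
      have := hc.add hx
      rwa [zero_add] at this
    · intro x hx
      rw [hG] at hx ⊢
      have := hc.neg.add hx
      rwa [neg_zero, zero_add] at this
    · intro x _; simp
    · intro x _; simp
    · intro x _; rfl
  · intro x hx y hy hxy
    exact red_inj ((mem_fib b x).1 hx).2 ((mem_fib b y).1 hy).2 hxy

end Aux

/-- The `V_n`-graded Hilbert function of `⟨p_n⟩ ⊆ k[x]/J_n` takes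
only the values 0 and 1: any two `V_n`-homogeneous polynomials of the same `V_n`-degree
lying in `J_n + ⟨p_n⟩` are `k`-linearly dependent modulo `J_n`; and the same holds with
`p_n` replaced by any `p⁺_{n,i}`. -/
theorem hilbert_function_at_most_one (n : ℕ) (hn : 3 ≤ n) (k : Type*) [Field k]
    (q : R n k)
    (hq : q = pn n k (by omega) ∨ ∃ j : Fin n, q = pplus n k j)
    (b : Fin n → ℕ) (f g : R n k)
    (hf : VHomog n k f b) (hg : VHomog n k g b)
    (hfI : f ∈ Jideal n k + Ideal.span {q})
    (hgI : g ∈ Jideal n k + Ideal.span {q}) :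
    ∃ a d : k, (a ≠ 0 ∨ d ≠ 0) ∧ a • f + d • g ∈ Jideal n k := by
  rcases hq with rfl | ⟨j, rfl⟩
  · obtain ⟨bq, hbq⟩ := pn_hom (n := n) (k := k) (by omega)
    exact final_main _ bq hbq
      (fun u v huv => stab_of_triangles _ _ (pn_tri _) u v huv) b f g hf hg hfI hgI
  · refine final_main _ _ (pplus_hom (bsel n j))
      (fun u v huv => pplus_stab (bsel n j) (fun i => ?_) (by omega) u v huv) b f g hf hg hfI hgI
    unfold bsel
    split_ifs <;> omega

end Veronese
end

section
/- Let k be an algebraically closed field, L ⊆ ℤ^n a subgroup with saturation Sat(L) = { u ∈ ℤ^n : m·u ∈ L for some integer m ≥ 1 }, and assume char k = 0 or char k does not divide the (finite) index [Sat(L) : L]. Let ρ : L → kˣ be a group homomorphism (a partial character), let E be the (finite) set of all group homomorphisms ρ' : Sat(L) → kˣ extending ρ, and for a partial character τ let I(τ) ⊆ k[ℤ^n] be the ideal generated by { x^u − τ(u) : u ∈ dom(τ) }. Then I(ρ) = ∩_{ρ' ∈ E} I(ρ'), each I(ρ') is prime, and for every ρ* ∈ E and every complete set R ⊂ Sat(L)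 of coset representatives of L in Sat(L) (for instance the lattice points of a half-open fundamental zonotope of a basis of L that lie in Sat(L)): ∩_{ρ' ∈ E, ρ' ≠ ρ*} I(ρ') = I(ρ) + ⟨ Σ_{u ∈ R} ρ*(u)^{-1} x^u ⟩. -/
open scoped BigOperators

namespace LaurentBinomial

variable (n : ℕ) (k : Type*) [Field k]

/-- The saturation `Sat(L) = {u ∈ ℤ^n : m • u ∈ L for some integer m ≥ 1}` of a
lattice `L ⊆ ℤ^n`. -/
def sat (L : Submodule ℤ (Fin n → ℤ)) : Submodule ℤ (Fin n → ℤ) where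
  carrier := {u | ∃ m : ℕ, 0 < m ∧ (m : ℤ) • u ∈ L}
  zero_mem' := ⟨1, one_pos, by simp⟩
  add_mem' := by
    rintro a b ⟨m, hm, ha⟩ ⟨m', hm', hb⟩
    refine ⟨m * m', Nat.mul_pos hm hm', ?_⟩
    rw [smul_add]
    refine Submodule.add_mem _ ?_ ?_
    · have h : ((m * m' : ℕ) : ℤ) • a = (m' : ℤ) • ((m : ℤ) • a) := by
        rw [smul_smul]; push_cast; rw [mul_comm]
      rw [h]; exact L.smul_mem _ ha
    · have h : ((m * m' : ℕ) : ℤ) • b = (m : ℤ) • ((m' : ℤ) • b) := by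
        rw [smul_smul]; push_cast; ring_nf
      rw [h]; exact L.smul_mem _ hb
  smul_mem' := by
    rintro c a ⟨m, hm, ha⟩
    exact ⟨m, hm, by rw [smul_comm]; exact L.smul_mem c ha⟩

lemma le_sat (L : Submodule ℤ (Fin n → ℤ)) : L ≤ sat n L :=
  fun u hu => ⟨1, one_pos, by simpa using hu⟩

/-- `τ : H → kˣ` is a partial character (a homomorphism from the additive group `H`
to the multiplicative group `kˣ`). -/
def IsChar (H : Submodule ℤ (Fin n → ℤ)) (τ : ↥H → kˣ) : Prop :=
  ∀ a b : ↥H, τ (a + b) = τ a * τ b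

/-- The binomial ideal `I(τ) = ⟨x^u − τ(u) : u ∈ H⟩` in the Laurent polynomial ring
`k[ℤ^n]` associated to a partial character `τ` on the lattice `H`. -/
noncomputable def charIdeal (H : Submodule ℤ (Fin n → ℤ)) (τ : ↥H → kˣ) :
    Ideal (AddMonoidAlgebra k (Fin n → ℤ)) :=
  Ideal.span {f | ∃ u : ↥H,
    f = AddMonoidAlgebra.single (↑u : Fin n → ℤ) (1 : k) -
      AddMonoidAlgebra.single (0 : Fin n → ℤ) ((τ u : k))}

/-- `ρ'` is a partial character on `Sat(L)` extending `ρ`. -/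
def ExtendsChar (L : Submodule ℤ (Fin n → ℤ)) (ρ : ↥L → kˣ)
    (ρ' : ↥(sat n L) → kˣ) : Prop :=
  IsChar n k (sat n L) ρ' ∧ ∀ u : ↥L, ρ' ⟨↑u, le_sat n L u.2⟩ = ρ u

variable {n k}

lemma IsChar.map_zero {H : Submodule ℤ (Fin n → ℤ)} {τ : ↥H → kˣ} (h : IsChar n k H τ) :
    τ 0 = 1 := by
  have := h 0 0
  rw [add_zero] at this
  exact (mul_eq_left.mp this.symm)

/-- A partial character as a bundled homomorphism. -/
def IsChar.hom {H : Submodule ℤ (Fin n → ℤ)} {τ : ↥H → kˣ} (h : IsChar n k H τ) :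
    ↥H →+ Additive kˣ where
  toFun u := Additive.ofMul (τ u)
  map_zero' := by rw [h.map_zero]; rfl
  map_add' a b := by rw [h a b]; rfl

lemma exists_root_unit [IsAlgClosed k] (m : ℕ) (hm : m ≠ 0) (a : kˣ) : ∃ b : kˣ, b ^ m = a := by
  obtain ⟨z, hz⟩ := IsAlgClosed.exists_pow_nat_eq (a : k) (Nat.pos_of_ne_zero hm)
  have hz0 : z ≠ 0 := by
    rintro rfl
    rw [zero_pow hm] at hz
    exact a.ne_zero hz.symm
  exact ⟨Units.mk0 z hz0, Units.ext (by simpa using hz)⟩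

/-- Every partial character extends to the whole lattice. -/
lemma exists_extension [IsAlgClosed k] {H : Submodule ℤ (Fin n → ℤ)} {τ : ↥H → kˣ}
    (h : IsChar n k H τ) :
    ∃ χ : (Fin n → ℤ) →+ Additive kˣ, ∀ u : ↥H, (χ u).toMul = τ u := by
  let _ : DivisibleBy (Additive kˣ) ℕ := divisibleByOfSMulRightSurj _ _ (by
    intro m hm a
    obtain ⟨b, hb⟩ := exists_root_unit m hm a.toMul
    exact ⟨Additive.ofMul b, by simp only [← ofMul_pow, hb]; rfl⟩)
  let _ : DivisibleBy (Additive kˣ) ℤ := AddGroup.divisibleByIntOfDivisibleByNat _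
  obtain ⟨χ, hχ⟩ := (Module.Baer.of_divisible (Additive kˣ)).extension_property_addMonoidHom
    H.subtype.toAddMonoidHom Subtype.val_injective h.hom
  refine ⟨χ, fun u => ?_⟩
  have := DFunLike.congr_fun hχ u
  exact congrArg Additive.toMul this

open AddMonoidAlgebra in
lemma single_sub_mem {H : Submodule ℤ (Fin n → ℤ)} {τ : ↥H → kˣ} (u : ↥H) :
    single (u : Fin n → ℤ) (1 : k) - single 0 (τ u : k) ∈ charIdeal n k H τ :=
  Ideal.subset_span ⟨u, rfl⟩

open AddMonoidAlgebra in
/-- `x^u ↦ χ(u) x^u` into the group algebra of the quotient. -/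
noncomputable def toQuot (H : Submodule ℤ (Fin n → ℤ)) (χ : (Fin n → ℤ) →+ Additive kˣ) :
    AddMonoidAlgebra k (Fin n → ℤ) →ₐ[k] AddMonoidAlgebra k ((Fin n → ℤ) ⧸ H) :=
  AddMonoidAlgebra.lift k _ _
    { toFun := fun u => single (H.mkQ u.toAdd) ((χ u.toAdd).toMul : k)
      map_one' := by simp [one_def]
      map_mul' := fun a b => by simp [single_mul_single] }

open AddMonoidAlgebra in
lemma toQuot_single (H : Submodule ℤ (Fin n → ℤ)) (χ : (Fin n → ℤ) →+ Additive kˣ)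
    (u : Fin n → ℤ) (c : k) :
    toQuot H χ (single u c) = single (H.mkQ u) (c * ((χ u).toMul : k)) := by
  simp [toQuot, lift_single]

open AddMonoidAlgebra in
/-- `x^u ↦ χ(u)⁻¹ x^u` as units. -/
noncomputable def fromLat (χ : (Fin n → ℤ) →+ Additive kˣ)
    (I : Ideal (AddMonoidAlgebra k (Fin n → ℤ))) :
    (Fin n → ℤ) →+ Additive (AddMonoidAlgebra k (Fin n → ℤ) ⧸ I)ˣ where
  toFun u := Additive.ofMul
    { val := Ideal.Quotient.mk I (single u (((χ u).toMul⁻¹ : kˣ) : k))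
      inv := Ideal.Quotient.mk I (single (-u) ((χ u).toMul : k))
      val_inv := by rw [← map_mul, single_mul_single]; simp [← one_def]
      inv_val := by rw [← map_mul, single_mul_single]; simp [← one_def] }
  map_zero' := by
    apply Additive.toMul.injective; ext; simp [← one_def]
  map_add' a b := by
    apply Additive.toMul.injective; ext; simp [← map_mul, single_mul_single, mul_comm]

open AddMonoidAlgebra in
lemma charIdeal_eq_ker {H : Submodule ℤ (Fin n → ℤ)} {τ : ↥H → kˣ}
    (χ : (Fin n → ℤ) →+ Additive kˣ) (hχ : ∀ u : ↥H, (χ u).toMul = τ u) :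
    charIdeal n k H τ = RingHom.ker (toQuot H χ) := by
  apply le_antisymm
  · rw [charIdeal, Ideal.span_le]
    rintro _ ⟨u, rfl⟩
    have : H.mkQ (u : Fin n → ℤ) = 0 := by simp
    rw [SetLike.mem_coe, RingHom.mem_ker, map_sub, toQuot_single, toQuot_single, this, hχ]
    simp
  · set I := charIdeal n k H τ with hI
    have hle : H.toAddSubgroup ≤ (fromLat χ I).ker := by
      intro u hu
      rw [AddMonoidHom.mem_ker]
      apply Additive.toMul.injective
      ext
      change Ideal.Quotient.mk I (single u (((χ u).toMul⁻¹ : kˣ) : k)) = 1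
      rw [← map_one (Ideal.Quotient.mk I), Ideal.Quotient.eq]
      have h1 := I.mul_mem_left (single 0 (((χ u).toMul⁻¹ : kˣ) : k))
        (single_sub_mem (τ := τ) ⟨u, hu⟩)
      rw [mul_sub, single_mul_single, single_mul_single, ← hχ] at h1
      simpa [one_def] using h1
    let g : ((Fin n → ℤ) ⧸ H) →+ Additive (AddMonoidAlgebra k (Fin n → ℤ) ⧸ I)ˣ :=
      QuotientAddGroup.lift H.toAddSubgroup (fromLat χ I) hle
    let ψ : AddMonoidAlgebra k ((Fin n → ℤ) ⧸ H) →ₐ[k] (AddMonoidAlgebra k (Fin n → ℤ) ⧸ I) :=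
      AddMonoidAlgebra.lift k _ _ ((Units.coeHom _).comp (AddMonoidHom.toMultiplicativeLeft g))
    have hcomp : ψ.comp (toQuot H χ) = Ideal.Quotient.mkₐ k I := by
      refine AddMonoidAlgebra.algHom_ext ?_ (Subsingleton.elim _ _)
      intro u
      rw [AlgHom.comp_apply, toQuot_single]
      have : ψ (single (H.mkQ u) (1 * ((χ u).toMul : k))) =
        ((χ u).toMul : k) • Ideal.Quotient.mkₐ k I (single u (((χ u).toMul⁻¹ : kˣ) : k)) := by
        simp only [ψ, lift_single, one_mul]
        rfl
      rw [this, ← map_smul]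
      simp
    intro f hf
    rw [RingHom.mem_ker] at hf
    have := DFunLike.congr_fun hcomp f
    rw [AlgHom.comp_apply] at this
    erw [hf] at this
    rw [map_zero] at this
    exact Ideal.Quotient.eq_zero_iff_mem.mp this.symm

lemma isPrime_charIdeal_sat [IsAlgClosed k] (L : Submodule ℤ (Fin n → ℤ))
    (τ : ↥(sat n L) → kˣ) (hτ : IsChar n k (sat n L) τ) :
    (charIdeal n k (sat n L) τ).IsPrime := by
  obtain ⟨χ, hχ⟩ := exists_extension hτ
  rw [charIdeal_eq_ker χ hχ]
  have : IsAddTorsionFree ((Fin n → ℤ) ⧸ sat n L) := by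
    refine ⟨fun m hm => ?_⟩
    intro a b hab
    obtain ⟨a, rfl⟩ := Submodule.Quotient.mk_surjective _ a
    obtain ⟨b, rfl⟩ := Submodule.Quotient.mk_surjective _ b
    simp only [← Submodule.Quotient.mk_smul] at hab
    rw [Submodule.Quotient.eq] at hab ⊢
    obtain ⟨m', hm', h⟩ := hab
    refine ⟨m' * m, Nat.mul_pos hm' (Nat.pos_of_ne_zero hm), ?_⟩
    rw [← smul_sub] at h
    rw [Nat.cast_mul, mul_smul, natCast_zsmul (n := m)]
    exact h
  have : AddMonoid.FG ((Fin n → ℤ) ⧸ sat n L) := by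
    rw [← AddGroup.fg_iff_addMonoid_fg, ← Module.Finite.iff_addGroup_fg]
    infer_instance
  have : IsDomain (AddMonoidAlgebra k ((Fin n → ℤ) ⧸ sat n L)) := NoZeroDivisors.to_isDomain _
  exact RingHom.ker_isPrime _

/-- The finite group `Sat(L)/L`. -/
abbrev SQ (L : Submodule ℤ (Fin n → ℤ)) := ↥(sat n L) ⧸ L.comap (sat n L).subtype

instance finite_SQ (L : Submodule ℤ (Fin n → ℤ)) : Finite (SQ L) := by
  apply Module.finite_of_fg_torsion
  intro x
  obtain ⟨⟨u, m, hm, hu⟩, rfl⟩ := Submodule.Quotient.mk_surjective _ x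
  refine ⟨⟨(m : ℤ), ?_⟩, ?_⟩
  · rw [mem_nonZeroDivisors_iff_ne_zero]
    exact_mod_cast hm.ne'
  · change (m : ℤ) • (Submodule.Quotient.mk _ : SQ L) = 0
    rw [← Submodule.Quotient.mk_smul, Submodule.Quotient.mk_eq_zero]
    exact hu

noncomputable instance fintype_SQ (L : Submodule ℤ (Fin n → ℤ)) : Fintype (SQ L) :=
  Fintype.ofFinite _

lemma hasEnough [IsAlgClosed k] {L : Submodule ℤ (Fin n → ℤ)}
    (hN : (Nat.card (SQ L) : k) ≠ 0) :
    HasEnoughRootsOfUnity k (Monoid.exponent (Multiplicative (SQ L))) := by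
  have : NeZero ((Monoid.exponent (Multiplicative (SQ L)) : ℕ) : k) := by
    refine ⟨fun h0 => hN ?_⟩
    obtain ⟨c, hc⟩ := Group.exponent_dvd_nat_card (G := Multiplicative (SQ L))
    have hc' : Nat.card (SQ L) = _ := hc
    rw [hc', Nat.cast_mul, h0, zero_mul]
  infer_instance

section

variable {L : Submodule ℤ (Fin n → ℤ)} {ρ : ↥L → kˣ} {ρ' : ↥(sat n L) → kˣ}

open AddMonoidAlgebra

lemma charIdeal_le (h : ExtendsChar n k L ρ ρ') :
    charIdeal n k L ρ ≤ charIdeal n k (sat n L) ρ' := by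
  rw [charIdeal, Ideal.span_le]
  rintro _ ⟨u, rfl⟩
  rw [← h.2 u]
  exact single_sub_mem (τ := ρ') ⟨u, le_sat n L u.2⟩

variable (ρ ρ') in
noncomputable def cls (u : ↥(sat n L)) : AddMonoidAlgebra k (Fin n → ℤ) ⧸ charIdeal n k L ρ :=
  Ideal.Quotient.mk _ (single (u : Fin n → ℤ) (((ρ' u)⁻¹ : kˣ) : k))

lemma cls_add (h : ExtendsChar n k L ρ ρ') (u v : ↥(sat n L)) :
    cls ρ ρ' (u + v) = cls ρ ρ' u * cls ρ ρ' v := by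
  rw [cls, cls, cls, ← map_mul, single_mul_single, h.1 u v]
  simp [mul_comm]

lemma cls_eq_one (h : ExtendsChar n k L ρ ρ') (u : ↥(sat n L)) (hu : (u : Fin n → ℤ) ∈ L) :
    cls ρ ρ' u = 1 := by
  rw [cls, ← map_one (Ideal.Quotient.mk _), Ideal.Quotient.eq]
  have h1 := (charIdeal n k L ρ).mul_mem_left (single 0 (((ρ' u)⁻¹ : kˣ) : k))
    (single_sub_mem (τ := ρ) ⟨u, hu⟩)
  rw [mul_sub, single_mul_single, single_mul_single, ← h.2] at h1
  simpa [one_def] using h1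

lemma cls_congr (h : ExtendsChar n k L ρ ρ') (u v : ↥(sat n L))
    (huv : (u : Fin n → ℤ) - v ∈ L) : cls ρ ρ' u = cls ρ ρ' v := by
  have := cls_add h (u - v) v
  rw [sub_add_cancel, cls_eq_one h (u - v) huv, one_mul] at this
  exact this

variable (ρ ρ') in
noncomputable def clsQ (g : SQ L) : AddMonoidAlgebra k (Fin n → ℤ) ⧸ charIdeal n k L ρ :=
  cls ρ ρ' (Quotient.out g)

lemma clsQ_mk (h : ExtendsChar n k L ρ ρ') (u : ↥(sat n L)) :
    clsQ ρ ρ' (Submodule.Quotient.mk u) = cls ρ ρ' u := by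
  apply cls_congr h
  have : (Submodule.Quotient.mk (Quotient.out (Submodule.Quotient.mk u : SQ L)) : SQ L)
    = Submodule.Quotient.mk u := Quotient.out_eq _
  rw [Submodule.Quotient.eq] at this
  exact this

variable (ρ ρ') in
noncomputable def idem : AddMonoidAlgebra k (Fin n → ℤ) ⧸ charIdeal n k L ρ :=
  ∑ g : SQ L, clsQ ρ ρ' g

lemma cls_mul_idem (h : ExtendsChar n k L ρ ρ') (v : ↥(sat n L)) :
    cls ρ ρ' v * idem ρ ρ' = idem ρ ρ' := by
  rw [idem, Finset.mul_sum]
  refine Fintype.sum_equiv (Equiv.addLeft (Submodule.Quotient.mk v : SQ L)) _ _ fun g => ?_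
  obtain ⟨u, rfl⟩ := Submodule.Quotient.mk_surjective _ g
  change _ = clsQ ρ ρ' (Submodule.Quotient.mk (v + u))
  rw [clsQ_mk h, clsQ_mk h, cls_add h]

lemma gen_mul_idem (h : ExtendsChar n k L ρ ρ') (v : ↥(sat n L)) :
    Ideal.Quotient.mk (charIdeal n k L ρ)
      (single (v : Fin n → ℤ) (1 : k) - single 0 (ρ' v : k)) * idem ρ ρ' = 0 := by
  have h1 : (single (v : Fin n → ℤ) (1 : k) - single 0 (ρ' v : k)) =
      single 0 (ρ' v : k) * (single (v : Fin n → ℤ) (((ρ' v)⁻¹ : kˣ) : k) - 1) := by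
    rw [mul_sub, single_mul_single]; simp
  have h2 := cls_mul_idem h v
  rw [cls] at h2
  rw [h1, map_mul, mul_assoc, map_sub, map_one, sub_mul, one_mul, h2, sub_self, mul_zero]

lemma mk_mul_idem (h : ExtendsChar n k L ρ ρ') (f : AddMonoidAlgebra k (Fin n → ℤ))
    (hf : f ∈ charIdeal n k (sat n L) ρ') :
    Ideal.Quotient.mk (charIdeal n k L ρ) f * idem ρ ρ' = 0 := by
  induction hf using Submodule.span_induction with
  | mem x hx =>
    obtain ⟨u, rfl⟩ := hx
    exact gen_mul_idem h u
  | zero => simp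
  | add x y _ _ hx hy => rw [map_add, add_mul, hx, hy, add_zero]
  | smul a x _ hx => rw [smul_eq_mul, map_mul, mul_assoc, hx, mul_zero]

/-- A lift of the idempotent of `ρ'` lies in every other component. -/
lemma lift_idem_mem {ρ'' : ↥(sat n L) → kˣ} (h : ExtendsChar n k L ρ ρ')
    (h'' : ExtendsChar n k L ρ ρ'') (hne : ρ'' ≠ ρ') (e : AddMonoidAlgebra k (Fin n → ℤ))
    (he : Ideal.Quotient.mk (charIdeal n k L ρ) e = idem ρ ρ') :
    e ∈ charIdeal n k (sat n L) ρ'' := by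
  obtain ⟨v, hv⟩ := Function.ne_iff.mp hne
  have h1 := gen_mul_idem h v
  rw [← he, ← map_mul, Ideal.Quotient.eq_zero_iff_mem] at h1
  have h2 := charIdeal_le h'' h1
  have h3 := Ideal.mul_mem_right e _ (single_sub_mem (τ := ρ'') v)
  have h4 := Ideal.sub_mem _ h2 h3
  have hc : (ρ'' v : k) - ρ' v ≠ 0 := by
    rw [sub_ne_zero]; exact fun h => hv (Units.ext h)
  have h5 : (single (v : Fin n → ℤ) (1 : k) - single 0 (ρ' v : k)) * e -
      (single (v : Fin n → ℤ) (1 : k) - single 0 (ρ'' v : k)) * e =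
      single 0 ((ρ'' v : k) - ρ' v) * e := by
    rw [single_sub]; ring
  rw [h5] at h4
  have h6 := Ideal.mul_mem_left _ (single 0 (((ρ'' v : k) - ρ' v)⁻¹)) h4
  rw [← mul_assoc, single_mul_single, inv_mul_cancel₀ hc, add_zero, ← one_def, one_mul] at h6
  exact h6

/-- Twisting by a character of `Sat(L)/L`. -/
def twist (ρ' : ↥(sat n L) → kˣ) (ψ : Multiplicative (SQ L) →* kˣ) (u : ↥(sat n L)) : kˣ :=
  ρ' u * ψ (Multiplicative.ofAdd (Submodule.Quotient.mk u))

lemma twist_extends (h : ExtendsChar n k L ρ ρ') (ψ : Multiplicative (SQ L) →* kˣ) :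
    ExtendsChar n k L ρ (twist ρ' ψ) := by
  refine ⟨fun a b => ?_, fun u => ?_⟩
  · rw [twist, h.1, Submodule.Quotient.mk_add, ofAdd_add, map_mul, twist, twist]
    exact mul_mul_mul_comm _ _ _ _
  · rw [twist, h.2, (Submodule.Quotient.mk_eq_zero _).mpr, ofAdd_zero, map_one, mul_one]
    exact u.2

lemma exists_twist (h : ExtendsChar n k L ρ ρ') {ρ'' : ↥(sat n L) → kˣ}
    (h'' : ExtendsChar n k L ρ ρ'') : ∃ ψ, ρ'' = twist ρ' ψ := by
  let d : ↥(sat n L) →+ Additive kˣ := h''.1.hom - h.1.hom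
  have hd : ∀ u, d u = Additive.ofMul (ρ'' u / ρ' u) := fun u => rfl
  let D : SQ L →+ Additive kˣ :=
    QuotientAddGroup.lift (L.comap (sat n L).subtype).toAddSubgroup d (by
      intro u hu
      rw [AddMonoidHom.mem_ker, hd]
      have e1 := h.2 ⟨u, hu⟩
      have e2 := h''.2 ⟨u, hu⟩
      simp only [Subtype.coe_eta] at e1 e2
      rw [e1, e2, div_self', ofMul_one])
  refine ⟨AddMonoidHom.toMultiplicativeLeft D, funext fun u => ?_⟩
  have : AddMonoidHom.toMultiplicativeLeft D (Multiplicative.ofAdd (Submodule.Quotient.mk u)) =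
    ρ'' u / ρ' u := rfl
  rw [twist, this, mul_div_cancel]

lemma clsQ_twist (ψ : Multiplicative (SQ L) →* kˣ) (g : SQ L) :
    clsQ ρ (twist ρ' ψ) g =
      (((ψ (Multiplicative.ofAdd g))⁻¹ : kˣ) : k) • clsQ ρ ρ' g := by
  have : (Submodule.Quotient.mk (Quotient.out g) : SQ L) = g := Quotient.out_eq _
  rw [clsQ, clsQ, cls, cls, twist, this]
  rw [← Ideal.Quotient.mkₐ_eq_mk k, ← map_smul, smul_single, mul_inv, Units.val_mul,
    smul_eq_mul, mul_comm]

lemma sum_char_eq_zero [IsAlgClosed k] [Fintype (Multiplicative (SQ L) →* kˣ)]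
    (hN : (Nat.card (SQ L) : k) ≠ 0) (g : SQ L) (hg : g ≠ 0) :
    ∑ ψ : Multiplicative (SQ L) →* kˣ, (((ψ (Multiplicative.ofAdd g))⁻¹ : kˣ) : k) = 0 := by
  have := hasEnough (k := k) hN
  obtain ⟨φ, hφ⟩ := CommGroup.exists_apply_ne_one_of_hasEnoughRootsOfUnity
    (Multiplicative (SQ L)) k (a := Multiplicative.ofAdd g) (by simpa using hg)
  set s := ∑ ψ : Multiplicative (SQ L) →* kˣ, (((ψ (Multiplicative.ofAdd g))⁻¹ : kˣ) : k) with hs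
  have h1 : (((φ (Multiplicative.ofAdd g))⁻¹ : kˣ) : k) * s = s := by
    rw [hs, Finset.mul_sum]
    refine Fintype.sum_equiv (Equiv.mulLeft φ) _ _ fun ψ => ?_
    simp [mul_comm]
  by_contra h0
  have h2 := mul_right_cancel₀ h0 (h1.trans (one_mul s).symm)
  apply hφ
  rw [← inv_eq_one]
  exact Units.ext h2

lemma sum_idem [IsAlgClosed k] [Fintype (Multiplicative (SQ L) →* kˣ)]
    (hN : (Nat.card (SQ L) : k) ≠ 0) (h : ExtendsChar n k L ρ ρ') :
    ∑ ψ : Multiplicative (SQ L) →* kˣ, idem ρ (twist ρ' ψ) =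
      algebraMap k _ (Nat.card (SQ L) : k) := by
  have := hasEnough (k := k) hN
  simp only [idem]
  rw [Finset.sum_comm]
  simp only [clsQ_twist]
  simp only [← Finset.sum_smul]
  rw [Finset.sum_eq_single (0 : SQ L)]
  · have h0 : clsQ ρ ρ' (0 : SQ L) = 1 := by
      rw [← Submodule.Quotient.mk_zero, clsQ_mk h, cls_eq_one h]
      exact L.zero_mem
    rw [h0, Algebra.algebraMap_eq_smul_one]
    have hc := CommGroup.card_monoidHom_of_hasEnoughRootsOfUnity (Multiplicative (SQ L)) k
    congr 1
    simp only [ofAdd_zero, map_one, inv_one, Units.val_one, Finset.sum_const, Finset.card_univ,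
      nsmul_eq_mul, mul_one]
    rw [← Nat.card_eq_fintype_card, hc]
    rfl
  · intro g _ hg
    rw [sum_char_eq_zero hN g hg, zero_smul]
  · simp

lemma mk_gen_eq_idem (h : ExtendsChar n k L ρ ρ') (Rs : Finset (Fin n → ℤ))
    (hRs : ∀ r ∈ Rs, r ∈ sat n L) (hR : ∀ v ∈ sat n L, ∃! r, r ∈ Rs ∧ v - r ∈ L) :
    Ideal.Quotient.mk (charIdeal n k L ρ) (∑ u ∈ Rs.attach,
      single (↑u : Fin n → ℤ) (((ρ' ⟨↑u, hRs ↑u u.2⟩)⁻¹ : kˣ) : k)) = idem ρ ρ' := by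
  rw [map_sum, ← Finset.univ_eq_attach, idem]
  refine Fintype.sum_bijective
    (fun u : Rs => (Submodule.Quotient.mk ⟨↑u, hRs ↑u u.2⟩ : SQ L)) ⟨?_, ?_⟩ _ _ fun u => ?_
  · intro u v huv
    simp only [Submodule.Quotient.eq] at huv
    apply Subtype.ext
    exact (hR u (hRs u u.2)).unique ⟨u.2, by simp⟩ ⟨v.2, huv⟩
  · intro g
    obtain ⟨v, rfl⟩ := Submodule.Quotient.mk_surjective _ g
    obtain ⟨r, ⟨hr, hvr⟩, -⟩ := hR v v.2
    refine ⟨⟨r, hr⟩, ?_⟩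
    simp only
    symm
    rw [Submodule.Quotient.eq]
    exact hvr
  · rw [clsQ_mk h]; rfl

/-- The key decomposition: if `mk f * idem` lies in `J` for all extensions, so does `mk f`. -/
lemma mk_mem_of_forall [IsAlgClosed k] (hN : (Nat.card (SQ L) : k) ≠ 0)
    (h : ExtendsChar n k L ρ ρ')
    (J : Ideal (AddMonoidAlgebra k (Fin n → ℤ) ⧸ charIdeal n k L ρ))
    (x : AddMonoidAlgebra k (Fin n → ℤ) ⧸ charIdeal n k L ρ)
    (hx : ∀ τ, ExtendsChar n k L ρ τ → x * idem ρ τ ∈ J) : x ∈ J := by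
  have := hasEnough (k := k) hN
  let _ : Fintype (Multiplicative (SQ L) →* kˣ) := Fintype.ofFinite _
  have h1 : x * algebraMap k _ (Nat.card (SQ L) : k) ∈ J := by
    rw [← sum_idem hN h, Finset.mul_sum]
    exact J.sum_mem fun ψ _ => hx _ (twist_extends h ψ)
  have h2 := J.mul_mem_right (algebraMap k _ (Nat.card (SQ L) : k)⁻¹) h1
  rwa [mul_assoc, ← map_mul, mul_inv_cancel₀ hN, map_one, mul_one] at h2

end

/-- Over an algebraically closed field whose characteristic does not
divide the index `[Sat(L) : L]`, the ideal `I(ρ)` is the intersection of the prime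
ideals `I(ρ')` over the finitely many extensions `ρ'` of `ρ` to `Sat(L)`, and omitting
one extension `ρ*` yields `I(ρ)` plus the single generator
`Σ_{u ∈ R} ρ*(u)⁻¹ x^u`, for any complete set `R ⊆ Sat(L)` of coset representatives
of `L` in `Sat(L)`. -/
theorem laurent_subintersection (n : ℕ) (k : Type*) [Field k] [IsAlgClosed k]
    (L : Submodule ℤ (Fin n → ℤ)) (ρ : ↥L → kˣ) (hρ : IsChar n k L ρ)
    (hchar : ringChar k = 0 ∨
      ¬ ringChar k ∣ Nat.card (↥(sat n L) ⧸ L.comap (sat n L).subtype)) :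
    (∀ ρ' : ↥(sat n L) → kˣ, ExtendsChar n k L ρ ρ' →
      (charIdeal n k (sat n L) ρ').IsPrime) ∧
    Finite {ρ' : ↥(sat n L) → kˣ // ExtendsChar n k L ρ ρ'} ∧
    (charIdeal n k L ρ =
      ⨅ ρ' : {ρ' : ↥(sat n L) → kˣ // ExtendsChar n k L ρ ρ'},
        charIdeal n k (sat n L) ρ'.val) ∧
    ∀ ρstar : ↥(sat n L) → kˣ, ExtendsChar n k L ρ ρstar →
      ∀ Rs : Finset (Fin n → ℤ), ∀ hRs : ∀ r ∈ Rs, r ∈ sat n L,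
        (∀ v ∈ sat n L, ∃! r, r ∈ Rs ∧ v - r ∈ L) →
        (⨅ ρ' : {ρ' : ↥(sat n L) → kˣ // ExtendsChar n k L ρ ρ' ∧ ρ' ≠ ρstar},
            charIdeal n k (sat n L) ρ'.val) =
          charIdeal n k L ρ + Ideal.span
            {∑ u ∈ Rs.attach,
              AddMonoidAlgebra.single (↑u : Fin n → ℤ)
                (((ρstar ⟨↑u, hRs ↑u u.2⟩)⁻¹ : kˣ) : k)} := by
  have hN : (Nat.card (SQ L) : k) ≠ 0 := by
    intro h0
    have hd := (ringChar.spec k _).mp h0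
    rcases hchar with h | h
    · rw [h, zero_dvd_iff] at hd
      exact Nat.card_pos.ne' hd
    · exact h hd
  obtain ⟨χ, hχ⟩ := exists_extension hρ
  have h0 : ExtendsChar n k L ρ (fun u : ↥(sat n L) => (χ u).toMul) := by
    refine ⟨fun a b => ?_, fun u => hχ u⟩
    simp
  have hen := hasEnough (k := k) hN
  refine ⟨fun ρ' h => isPrime_charIdeal_sat L ρ' h.1, ?_, ?_, ?_⟩
  · refine Finite.of_surjective (fun ψ : Multiplicative (SQ L) →* kˣ =>
      (⟨_, twist_extends h0 ψ⟩ : {ρ' : ↥(sat n L) → kˣ // ExtendsChar n k L ρ ρ'})) ?_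
    rintro ⟨ρ', h⟩
    obtain ⟨ψ, rfl⟩ := exists_twist h0 h
    exact ⟨ψ, rfl⟩
  · apply le_antisymm
    · exact le_iInf fun ρ' => charIdeal_le ρ'.2
    · intro f hf
      rw [Ideal.mem_iInf] at hf
      rw [← Ideal.Quotient.eq_zero_iff_mem, ← Ideal.mem_bot]
      refine mk_mem_of_forall hN h0 _ _ fun τ hτ => ?_
      rw [mk_mul_idem hτ f (hf ⟨τ, hτ⟩)]
      exact Ideal.zero_mem _
  · intro ρstar hstar Rs hRs hR
    have hgen := mk_gen_eq_idem hstar Rs hRs hR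
    apply le_antisymm
    · intro f hf
      rw [Ideal.mem_iInf] at hf
      have hmem : Ideal.Quotient.mk (charIdeal n k L ρ) f ∈ Ideal.span {idem ρ ρstar} := by
        refine mk_mem_of_forall hN h0 _ _ fun τ hτ => ?_
        by_cases hc : τ = ρstar
        · subst hc
          exact Ideal.mul_mem_left _ _ (Ideal.mem_span_singleton_self _)
        · rw [mk_mul_idem hτ f (hf ⟨τ, hτ, hc⟩)]
          exact Ideal.zero_mem _
      rw [Ideal.mem_span_singleton'] at hmem
      obtain ⟨a, ha⟩ := hmem
      obtain ⟨a, rfl⟩ := Ideal.Quotient.mk_surjective a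
      rw [← hgen, ← map_mul, eq_comm, Ideal.Quotient.eq] at ha
      rw [← sub_add_cancel f (a * _)]
      exact Submodule.add_mem_sup ha
        (Ideal.mul_mem_left _ a (Ideal.mem_span_singleton_self _))
    · refine sup_le (le_iInf fun ρ' => charIdeal_le ρ'.2.1) ?_
      rw [Ideal.span_singleton_le_iff_mem, Ideal.mem_iInf]
      exact fun ρ' => lift_idem_mem hstar ρ'.2.1 ρ'.2.2 _ hgen

end LaurentBinomial
end

section
/- The principal minor ideal J_n is a complete intersection: it is generated by the c_n principal 2-minors and has height (codimension) exactly c_n in k[x]; equivalently, the Krull dimension of k[x]/J_n equals n, which is also the height of the second Veronese ideal I_n, so that J_n ⊆ I_n is a complete intersection of the same codimension. -/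
open scoped BigOperators

namespace Veronese

open MvPolynomial

variable (n : ℕ)

variable (k : Type*) [Field k]

/-- the height (codimension) of an ideal: the infimum of the heights of the primes
containing it. -/
noncomputable def idealHeight {A : Type*} [CommRing A] (I : Ideal A) : ℕ∞ :=
  ⨅ (P : PrimeSpectrum A) (_ : I ≤ P.asIdeal), Order.height P

section helpers

lemma height_chain {α : Type*} [Preorder α] (s : LTSeries α) :
    Order.height s.head + s.length ≤ Order.height s.last := by
  have key : ∀ i : ℕ, ∀ h : i < s.length + 1,
      Order.height s.head + i ≤ Order.height (s ⟨i, h⟩) := by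
    intro i
    induction i with
    | zero => intro h; simp [RelSeries.head]
    | succ i ih =>
      intro h
      have h1 := ih (by omega)
      have h2 : s ⟨i, by omega⟩ < s ⟨i + 1, h⟩ := s.strictMono (by simp [Fin.lt_def])
      have h3 := Order.height_add_one_le h2
      push_cast
      rw [← add_assoc]
      exact le_trans (by gcongr) h3
  exact key s.length (by omega)

lemma height_monic {A : Type*} [CommRing A] (P : PrimeSpectrum (Polynomial A))
    (f : Polynomial A) (hf : f.Monic) (hfP : f ∈ P.asIdeal) :
    Order.height (PrimeSpectrum.comap Polynomial.C P) + 1 ≤ Order.height P := by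
  let F : PrimeSpectrum A → PrimeSpectrum (Polynomial A) := fun p =>
    ⟨p.asIdeal.map Polynomial.C, inferInstance⟩
  have hmem : ∀ (p : PrimeSpectrum A) (a : A), Polynomial.C a ∈ (F p).asIdeal ↔ a ∈ p.asIdeal := by
    intro p a
    constructor
    · intro h
      have := (Ideal.mem_map_C_iff.1 h) 0
      simpa using this
    · exact fun h => Ideal.mem_map_of_mem _ h
  have hmono : StrictMono F := by
    refine Monotone.strictMono_of_injective ?_ ?_
    · intro p q h
      exact Ideal.map_mono h
    · intro p q h
      ext a
      rw [← hmem, ← hmem, h]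
  have h1 := Order.height_le_height_apply_of_strictMono F hmono
    (PrimeSpectrum.comap Polynomial.C P)
  have h2 : F (PrimeSpectrum.comap Polynomial.C P) < P := by
    refine lt_of_le_of_ne (Ideal.map_comap_le) ?_
    intro h
    have h3 : f ∈ (F (PrimeSpectrum.comap Polynomial.C P)).asIdeal := by rw [h]; exact hfP
    have h4 := (Ideal.mem_map_C_iff.1 h3) f.natDegree
    rw [hf.coeff_natDegree] at h4
    exact (PrimeSpectrum.comap Polynomial.C P).2.ne_top ((Ideal.eq_top_iff_one _).2 h4)
  exact le_trans (by gcongr) (Order.height_add_one_le h2)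

lemma height_equiv {A B : Type*} [CommRing A] [CommRing B] (e : A ≃+* B) (P : PrimeSpectrum B) :
    Order.height (PrimeSpectrum.comap e.toRingHom P) = Order.height P := by
  rw [← PrimeSpectrum.height_eq_orderHeight, ← PrimeSpectrum.height_eq_orderHeight]
  exact e.height_comap P.asIdeal

lemma height_mv (A : Type*) [CommRing A] (σ : Type*) [Finite σ]
    (P : PrimeSpectrum (MvPolynomial σ A))
    (hP : ∀ s, ∃ f : Polynomial A, f.Monic ∧
      Polynomial.aeval (X s : MvPolynomial σ A) f ∈ P.asIdeal) :
    (Nat.card σ : ℕ∞) ≤ Order.height P := by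
  induction σ using Finite.induction_empty_option with
  | of_equiv e H =>
    rename_i α β
    rw [← height_equiv (renameEquiv A e).toRingEquiv P, ← Nat.card_congr e]
    apply H
    intro s
    obtain ⟨f, hf, h⟩ := hP (e s)
    refine ⟨f, hf, ?_⟩
    rw [PrimeSpectrum.comap_asIdeal, Ideal.mem_comap]
    convert! h using 1
    change (renameEquiv A e) _ = _
    have h1 := Polynomial.aeval_algHom_apply (renameEquiv A e).toAlgHom (X s) f
    have h2 : (renameEquiv A e).toAlgHom (X s) = X (e s) := by simp
    rw [h2] at h1
    exact h1.symm
  | h_empty => simp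
  | h_option IH =>
    rename_i α _
    set e := (optionEquivLeft A α).symm.toRingEquiv with he
    rw [← height_equiv e P]
    obtain ⟨f, hf, h⟩ := hP none
    refine le_trans ?_ (height_monic _ (f.map (C : A →+* MvPolynomial α A)) (hf.map _) ?_)
    · rw [Finite.card_option]
      push_cast
      gcongr
      apply IH
      intro s
      obtain ⟨f, hf, h⟩ := hP (some s)
      refine ⟨f, hf, ?_⟩
      rw [PrimeSpectrum.comap_asIdeal, Ideal.mem_comap, PrimeSpectrum.comap_asIdeal,
        Ideal.mem_comap]
      convert! h using 1
      let φ : MvPolynomial α A →ₐ[A] MvPolynomial (Option α) A :=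
        (optionEquivLeft A α).symm.toAlgHom.comp Polynomial.CAlgHom
      have h1 := Polynomial.aeval_algHom_apply φ (X s) f
      have h2 : φ (X s) = X (some s) := by simp [φ]
      rw [h2] at h1
      exact h1.symm
    · rw [PrimeSpectrum.comap_asIdeal, Ideal.mem_comap]
      convert! h using 1
      have h1 := Polynomial.aeval_algHom_apply (optionEquivLeft A α).symm.toAlgHom
        Polynomial.X f
      have h2 : (optionEquivLeft A α).symm.toAlgHom Polynomial.X = X none := by simp
      rw [h2] at h1
      exact h1.symm

noncomputable def minor (s : Sym2 (Fin n)) : R n k :=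
  Sym2.lift ⟨fun i j => X s(i, i) * X s(j, j) - X s(i, j) ^ 2,
    fun i j => by dsimp only; rw [Sym2.eq_swap (a := i) (b := j)]; ring⟩ s

lemma Jideal_eq : Jideal n k =
    Ideal.span (Set.range fun s : {s : Sym2 (Fin n) // ¬ s.IsDiag} => minor n k s) := by
  unfold Jideal
  congr 1
  ext f
  constructor
  · rintro ⟨i, j, h, rfl⟩
    exact ⟨⟨s(i, j), by simpa using h.ne⟩, rfl⟩
  · rintro ⟨⟨s, hs⟩, rfl⟩
    induction s using Sym2.ind with
    | _ i j =>
      have hs' : i ≠ j := by simpa using hs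
      rcases lt_or_gt_of_ne hs' with h | h
      · exact ⟨i, j, h, rfl⟩
      · refine ⟨j, i, h, ?_⟩
        rw [Sym2.eq_swap (a := j) (b := i)]
        simp only [minor, Sym2.lift_mk]
        ring

lemma J_le_I : Jideal n k ≤ Iideal n k := by
  unfold Jideal
  rw [Ideal.span_le]
  rintro f ⟨i, j, h, rfl⟩
  simp only [Iideal, SetLike.mem_coe, RingHom.mem_ker, veroHom, map_sub, map_mul, map_pow,
    aeval_X, Sym2.lift_mk]
  ring

lemma card_nd : Nat.card {s : Sym2 (Fin n) // ¬ s.IsDiag} = c n := by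
  classical
  rw [Nat.card_eq_fintype_card, Sym2.card_subtype_not_diag, Fintype.card_fin, c]

lemma dimR : ringKrullDim (R n k) = ((n + c n : ℕ) : WithBot ℕ∞) := by
  rw [MvPolynomial.ringKrullDim_of_isNoetherianRing, ringKrullDim_eq_zero_of_field,
    Nat.card_eq_fintype_card, Sym2.card, Fintype.card_fin, Nat.choose_succ_succ, c]
  simp

lemma height_le (P : PrimeSpectrum (R n k)) : Order.height P ≤ ((n + c n : ℕ) : ℕ∞) := by
  have h := Order.height_le_krullDim P
  change _ ≤ ringKrullDim (R n k) at h
  rw [dimR] at h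
  exact_mod_cast h

lemma height_ge (P : PrimeSpectrum (R n k)) (hP : Jideal n k ≤ P.asIdeal) :
    (c n : ℕ∞) ≤ Order.height P := by
  classical
  let e : MvPolynomial {s : Sym2 (Fin n) // ¬ s.IsDiag}
      (MvPolynomial {s : Sym2 (Fin n) // ¬ ¬ s.IsDiag} k) ≃ₐ[k] R n k :=
    (sumAlgEquiv k _ _).symm.trans (renameEquiv k (Equiv.sumCompl _))
  have eX : ∀ s, e (X s) = X s.1 := by
    intro s
    simp [e]
  have eC : ∀ s, e (C (X s)) = X s.1 := by
    intro s
    simp [e]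
  rw [← height_equiv e.toRingEquiv, ← card_nd]
  apply height_mv
  rintro ⟨s, hs⟩
  have hm : minor n k s ∈ P.asIdeal := by
    apply hP
    rw [Jideal_eq]
    exact Ideal.subset_span ⟨⟨s, hs⟩, rfl⟩
  induction s using Sym2.ind with
  | _ i j =>
    refine ⟨Polynomial.X ^ 2 - Polynomial.C (X ⟨s(i, i), by simp⟩ * X ⟨s(j, j), by simp⟩),
      Polynomial.monic_X_pow_sub_C _ two_ne_zero, ?_⟩
    rw [PrimeSpectrum.comap_asIdeal, Ideal.mem_comap, ← neg_mem_iff]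
    convert! hm using 1
    change - e _ = _
    simp only [map_sub, map_pow, Polynomial.aeval_X, Polynomial.aeval_C, minor, Sym2.lift_mk,
      MvPolynomial.algebraMap_eq, map_mul, eX, eC]
    ring

/-- evaluation killing the first `m` variables. -/
noncomputable def kill (m : ℕ) : R n k →ₐ[k] MvPolynomial (Fin n) k :=
  (aeval fun i : Fin n => if i.1 < m then 0 else X i).comp (veroHom n k)

noncomputable def killPrime (m : ℕ) : PrimeSpectrum (R n k) :=
  ⟨RingHom.ker (kill n k m), RingHom.ker_isPrime _⟩

lemma killPrime_lt (m : ℕ) (hm : m < n) : killPrime n k m < killPrime n k (m + 1) := by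
  refine lt_of_le_of_ne ?_ ?_
  · intro f hf
    have hf : kill n k m f = 0 := hf
    change kill n k (m + 1) f = 0
    have : kill n k (m + 1) =
        (aeval fun i : Fin n => if i.1 < m + 1 then (0 : MvPolynomial (Fin n) k) else X i).comp
          (kill n k m) := by
      unfold kill
      rw [← AlgHom.comp_assoc]
      congr 1
      ext1 i
      by_cases h : i.1 < m
      · simp [h, h.le]
      · simp [h]
    rw [this, AlgHom.comp_apply, hf, map_zero]
  · intro h
    have h1 : (X s(⟨m, hm⟩, ⟨m, hm⟩) : R n k) ∈ (killPrime n k (m + 1)).asIdeal := by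
      change kill n k (m + 1) _ = 0
      simp [kill, veroHom]
    rw [← h] at h1
    replace h1 : kill n k m _ = 0 := h1
    simp [kill, veroHom] at h1

lemma killPrime_strict : StrictMono fun i : Fin (n + 1) => killPrime n k i := by
  rw [Fin.strictMono_iff_lt_succ]
  intro i
  exact killPrime_lt n k i i.2

lemma killPrime_zero : (killPrime n k 0).asIdeal = Iideal n k := by
  ext f
  change kill n k 0 f = 0 ↔ veroHom n k f = 0
  have : kill n k 0 = veroHom n k := by
    unfold kill
    convert! AlgHom.id_comp _
    ext1 i
    simp
  rw [this]

lemma I_le_kill (m : Fin (n + 1)) : Iideal n k ≤ (killPrime n k m).asIdeal := by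
  rw [← killPrime_zero]
  have h : killPrime n k ((0 : Fin (n + 1)) : ℕ) ≤ killPrime n k m :=
    (killPrime_strict n k).monotone (Fin.zero_le m)
  rw [Fin.val_zero] at h
  exact h

end helpers

theorem principal_minor_ideal_complete_intersection (n : ℕ) (hn : 2 ≤ n)
    (k : Type*) [Field k] :
    (∃ g : Fin (c n) → R n k, Jideal n k = Ideal.span (Set.range g)) ∧
    idealHeight (Jideal n k) = (c n : ℕ∞) ∧
    ringKrullDim (R n k ⧸ Jideal n k) = (n : WithBot (WithTop ℕ)) ∧
    idealHeight (Iideal n k) = (c n : ℕ∞) ∧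
    Jideal n k ≤ Iideal n k := by
  have hJI := J_le_I n k
  have h0 : Order.height (killPrime n k 0) ≤ (c n : ℕ∞) := by
    have h1 := height_chain (LTSeries.mk n _ (killPrime_strict n k))
    have h2 := h1.trans (height_le n k _)
    change Order.height (killPrime n k 0) + (n : ℕ∞) ≤ _ at h2
    rw [Nat.cast_add, add_comm] at h2
    exact (ENat.add_le_add_iff_left (ENat.natCast_ne_top n)).1 h2
  refine ⟨?_, ?_, ?_, ?_, hJI⟩
  · have e := Finite.equivFinOfCardEq (card_nd n)
    refine ⟨fun i => minor n k (e.symm i), ?_⟩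
    rw [Jideal_eq]
    congr 1
    exact (e.symm.surjective.range_comp
      (fun s : {s : Sym2 (Fin n) // ¬ s.IsDiag} => minor n k s)).symm
  · refine le_antisymm ?_ ?_
    · refine le_trans (iInf₂_le (killPrime n k 0) ?_) h0
      rw [killPrime_zero]
      exact hJI
    · exact le_iInf₂ fun P hP => height_ge n k P hP
  · rw [ringKrullDim_quotient]
    change _ = ((n : ℕ∞) : WithBot ℕ∞)
    refine le_antisymm ?_ ?_
    · refine iSup_le fun s => ?_
      let t : LTSeries (PrimeSpectrum (R n k)) := s.map Subtype.val (fun _ _ h => h)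
      have h1 := height_chain t
      have h2 := h1.trans (height_le n k _)
      have h3 : (c n : ℕ∞) ≤ Order.height t.head := height_ge n k _ s.head.2
      have h4 : (c n : ℕ∞) + s.length ≤ ((n + c n : ℕ) : ℕ∞) :=
        le_trans (add_le_add_left h3 _) h2
      have h5 : s.length ≤ n := by
        have : c n + s.length ≤ n + c n := by exact_mod_cast h4
        omega
      exact WithBot.coe_le_coe.2 (Nat.cast_le.2 h5)
    · let t : LTSeries (PrimeSpectrum.zeroLocus (Jideal n k : Set (R n k))) :=
        LTSeries.mk n (fun i => ⟨killPrime n k i, hJI.trans (I_le_kill n k i)⟩)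
          (fun i j h => killPrime_strict n k h)
      exact Order.LTSeries.length_le_krullDim t
  · refine le_antisymm ?_ ?_
    · refine le_trans (iInf₂_le (killPrime n k 0) ?_) h0
      rw [killPrime_zero]
    · exact le_iInf₂ fun P hP => height_ge n k P (hJI.trans hP)

end Veronese
end
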